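/- arXiv:2404.07311 — 4 statements merged into one kernel-verified Lean document; each statement's English description precedes it below -/
import Mathlib

section
/- Let u_1,…,u_{q−2}, r̃, s̃ ∈ ℝⁿ be arbitrary, and set u_{q−1} = m_1^{−1/2}·(W_{21}·r̃ + W_{22}·s̃) and u_q = m_2^{−1/2}·(W_{11}·r̃ + W_{12}·s̃). Then, with w_l = Σ_{m=1}^{q−2} α_{m,l}·u_m, for every 1 ≤ l ≤ q one has G_l = w_l·w_l + 2·√(1/μ + q/(q−1))·w_l·r̃, and T = (1/2)·(1+μq/(q−1))^{−1}·[ −(q/(q−1))·(2+μq/(q−1))·r̃·r̃ + (q/(q−1))·s̃·s̃ + (2/√μ)·√(q/(q−1))·r̃·s̃ ]. -/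
open Real Finset Matrix

noncomputable section

/-- `λ_j = ((μ−1) + (−1)^{j+1}·√(μ²−(4/q−2)μ+1))/2` for `j ∈ {1,2}`. -/
def lamJ (q : ℕ) (μ : ℝ) (j : ℕ) : ℝ :=
  ((μ - 1) + (-1 : ℝ) ^ (j + 1) * Real.sqrt (μ ^ 2 - (4 / (q : ℝ) - 2) * μ + 1)) / 2

/-- `m_j = λ_j + 1`. -/
def mJ (q : ℕ) (μ : ℝ) (j : ℕ) : ℝ := lamJ q μ j + 1

/-- `x_j = 1 − q·m_j`. -/
def xJ (q : ℕ) (μ : ℝ) (j : ℕ) : ℝ := 1 - (q : ℝ) * mJ q μ j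

/-- `α_i ∈ ℝ^q` (1-based `i` and 1-based coordinate index as in the paper). -/
def alphaVec (q i : ℕ) : Fin q → ℝ :=
  fun k => (Real.sqrt ((i : ℝ) * ((i : ℝ) + 1)))⁻¹ *
    (if (k : ℕ) + 1 < i + 1 then 1
     else if (k : ℕ) + 1 = i + 1 then -(i : ℝ)
     else 0)

/-- `α_{m,l}` extended by `0` for `m ∈ {q−1, q}`. -/
def omegaVec (q : ℕ) (l : Fin q) : Fin q → ℝ :=
  fun m => if (m : ℕ) < q - 2 then alphaVec q ((m : ℕ) + 1) l else 0

/-- The 2×2 matrix `W` (rows/columns indexed by `Fin 2`; `W 0 0` = paper's `W_{11}`). -/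
def Wmat (q : ℕ) (μ : ℝ) : Matrix (Fin 2) (Fin 2) ℝ :=
  Matrix.of fun i j =>
    (Real.sqrt (1 / μ + (q : ℝ) / ((q : ℝ) - 1)))⁻¹ *
      (if i = 0 then
        (if j = 0 then (Real.sqrt (mJ q μ 2))⁻¹ / Real.sqrt ((q : ℝ) - 1 + xJ q μ 2 ^ 2)
         else (Real.sqrt (mJ q μ 1))⁻¹ / Real.sqrt ((q : ℝ) - 1 + xJ q μ 1 ^ 2))
       else
        (if j = 0 then (Real.sqrt (mJ q μ 1))⁻¹ / Real.sqrt ((q : ℝ) - 1 + xJ q μ 1 ^ 2)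
         else -((Real.sqrt (mJ q μ 2))⁻¹ / Real.sqrt ((q : ℝ) - 1 + xJ q μ 2 ^ 2))))

/-!
The vectors `(1, …, 1, x_j) ∈ ℝ^q` for `j = 1, 2` are orthogonal, that is `x₁ x₂ = -(q - 1)`, by
Vieta's formulas `m₁ + m₂ = μ + 1` and `m₁ m₂ = μ / q`. Let `N_j` be their lengths and put
`ρ_j = 1 / (√m_j N_j)`, so that `C W = !![ρ₂, ρ₁; ρ₁, -ρ₂]` with `C² = 1 / μ + q / (q - 1)`.
Orthogonality gives `ρ₁² + ρ₂² = C²`, `x₁ ρ₁² + x₂ ρ₂² = 1 / μ` and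
`(x₂ - x₁) ρ₁ ρ₂ = √(q / (q - 1)) / √μ`. Consequently

* `y := u_{q-1} / N₁ + u_q / N₂` is just `C r̃`,
* `z := x₁ u_{q-1} / N₁ + x₂ u_q / N₂` is `C⁻¹ (r̃ / μ + √(q / (q - 1)) / √μ s̃)`,

and the theorem follows from `G_l = w_l · w_l + 2 w_l · y` and `T = (z · z - y · y) / 2`.
-/

section Orthogonality

variable {d x y : ℝ}

lemma add_sq_eq_mul_sub (hxy : x * y = -d) : d + x ^ 2 = x * (x - y) := by
  linear_combination hxy

lemma inv_add_sq_add_inv_add_sq (hd : 0 < d) (hxy : x * y = -d) :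
    (d + x ^ 2)⁻¹ + (d + y ^ 2)⁻¹ = d⁻¹ := by
  field_simp
  linear_combination (d - x * y) * hxy

lemma div_add_sq_add_div_add_sq (hd : 0 < d) (hxy : x * y = -d) :
    y / (d + x ^ 2) + x / (d + y ^ 2) = (x + y) / d := by
  field_simp
  linear_combination -(x + y) * x * y * hxy

lemma sqrt_add_sq_mul_sqrt_add_sq (hd : 0 ≤ d) (hxy : x * y = -d) :
    √(d + x ^ 2) * √(d + y ^ 2) = √d * |x - y| := by
  have hprod : (d + x ^ 2) * (d + y ^ 2) = d * (x - y) ^ 2 := by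
    rw [add_sq_eq_mul_sub hxy, add_sq_eq_mul_sub ((mul_comm y x).trans hxy)]
    linear_combination -(x - y) ^ 2 * hxy
  rw [← Real.sqrt_mul (by positivity), hprod, Real.sqrt_mul hd, Real.sqrt_sq_eq_abs]

end Orthogonality

section Parameters

variable {q : ℕ} {μ : ℝ}

lemma mJ_one_add_mJ_two (q : ℕ) (μ : ℝ) : mJ q μ 1 + mJ q μ 2 = μ + 1 := by
  simp only [mJ, lamJ]
  ring

lemma mJ_two_le_mJ_one (q : ℕ) (μ : ℝ) : mJ q μ 2 ≤ mJ q μ 1 := by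
  have := Real.sqrt_nonneg (μ ^ 2 - (4 / (q : ℝ) - 2) * μ + 1)
  simp only [mJ, lamJ]
  linarith

lemma mJ_one_mul_mJ_two (hq : 0 < q) (hμ : 0 ≤ μ) : mJ q μ 1 * mJ q μ 2 = μ / q := by
  have four_div_le : 4 / (q : ℝ) ≤ 4 := div_le_self (by norm_num) (by exact_mod_cast hq)
  have discr_nonneg : 0 ≤ μ ^ 2 - (4 / (q : ℝ) - 2) * μ + 1 := by
    nlinarith [sq_nonneg (μ - 1)]
  simp only [mJ, lamJ]
  linear_combination (-1 / 4 : ℝ) * Real.sq_sqrt discr_nonneg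

lemma mJ_two_pos (hq : 0 < q) (hμ : 0 < μ) : 0 < mJ q μ 2 := by
  have hprod : 0 < mJ q μ 1 * mJ q μ 2 := by
    rw [mJ_one_mul_mJ_two hq hμ.le]
    positivity
  rcases pos_and_pos_or_neg_and_neg_of_mul_pos hprod with ⟨-, hpos⟩ | ⟨hneg₁, hneg₂⟩
  · exact hpos
  · linarith [mJ_one_add_mJ_two q μ]

lemma mJ_one_pos (hq : 0 < q) (hμ : 0 < μ) : 0 < mJ q μ 1 :=
  (mJ_two_pos hq hμ).trans_le (mJ_two_le_mJ_one q μ)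

lemma xJ_one_add_xJ_two (q : ℕ) (μ : ℝ) : xJ q μ 1 + xJ q μ 2 = 2 - q * (μ + 1) := by
  simp only [xJ]
  linear_combination -(q : ℝ) * mJ_one_add_mJ_two q μ

lemma xJ_one_mul_xJ_two (hq : 0 < q) (hμ : 0 ≤ μ) : xJ q μ 1 * xJ q μ 2 = -((q : ℝ) - 1) := by
  have hprod : q * (mJ q μ 1 * mJ q μ 2) = μ := by
    rw [mJ_one_mul_mJ_two hq hμ]
    field_simp
  simp only [xJ]
  linear_combination -(q : ℝ) * mJ_one_add_mJ_two q μ + q * hprod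

lemma xJ_one_lt_xJ_two (hq : 1 < q) (hμ : 0 ≤ μ) : xJ q μ 1 < xJ q μ 2 := by
  have one_lt : (1 : ℝ) < q := by exact_mod_cast hq
  refine lt_of_le_of_ne ?_ fun heq => ?_
  · exact sub_le_sub_left (mul_le_mul_of_nonneg_left (mJ_two_le_mJ_one q μ) q.cast_nonneg) 1
  · have mul_self_eq := xJ_one_mul_xJ_two hq.pos hμ
    rw [heq] at mul_self_eq
    linarith [mul_self_nonneg (xJ q μ 2)]

end Parameters

section Weights

/-- `N_j = √(q - 1 + x_j²)`, the length of the vector `(1, …, 1, x_j) ∈ ℝ^q`. -/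
def normJ (q : ℕ) (μ : ℝ) (j : ℕ) : ℝ := √((q : ℝ) - 1 + xJ q μ j ^ 2)

/-- `ρ_j = 1 / (√m_j N_j)`, which up to sign and the common factor `1 / C` are the entries of the
matrix `W`. -/
def weightJ (q : ℕ) (μ : ℝ) (j : ℕ) : ℝ := (√(mJ q μ j))⁻¹ / normJ q μ j

/-- `C = √(1/μ + q/(q - 1))`, the factor that normalises the matrix `W`. -/
def scaleW (q : ℕ) (μ : ℝ) : ℝ := √(1 / μ + (q : ℝ) / ((q : ℝ) - 1))

variable {q : ℕ} {μ : ℝ}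

lemma normJ_sq (hq : 0 < q) (μ : ℝ) (j : ℕ) : normJ q μ j ^ 2 = (q : ℝ) - 1 + xJ q μ j ^ 2 := by
  have one_le : (1 : ℝ) ≤ q := by exact_mod_cast hq
  exact Real.sq_sqrt (by nlinarith [sq_nonneg (xJ q μ j)])

lemma scaleW_sq (hq : 1 < q) (hμ : 0 < μ) :
    scaleW q μ ^ 2 = 1 / μ + (q : ℝ) / ((q : ℝ) - 1) := by
  have hd : (0 : ℝ) < q - 1 := sub_pos.2 (by exact_mod_cast hq)
  exact Real.sq_sqrt (by positivity)

lemma scaleW_pos (hq : 1 < q) (hμ : 0 < μ) : 0 < scaleW q μ := by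
  have hd : (0 : ℝ) < q - 1 := sub_pos.2 (by exact_mod_cast hq)
  exact Real.sqrt_pos.2 (by positivity)

lemma mJ_mul_weightJ_sq {j : ℕ} (hm : 0 < mJ q μ j) :
    mJ q μ j * weightJ q μ j ^ 2 = (normJ q μ j ^ 2)⁻¹ := by
  rw [weightJ, div_pow, inv_pow, Real.sq_sqrt hm.le]
  field_simp

lemma inv_normJ_sq_add_inv_normJ_sq (hq : 1 < q) (hμ : 0 ≤ μ) :
    (normJ q μ 1 ^ 2)⁻¹ + (normJ q μ 2 ^ 2)⁻¹ = ((q : ℝ) - 1)⁻¹ := by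
  have hd : (0 : ℝ) < q - 1 := sub_pos.2 (by exact_mod_cast hq)
  rw [normJ_sq hq.pos, normJ_sq hq.pos]
  exact inv_add_sq_add_inv_add_sq hd (xJ_one_mul_xJ_two hq.pos hμ)

lemma weightJ_one_sq_add_weightJ_two_sq (hq : 1 < q) (hμ : 0 < μ) :
    weightJ q μ 1 ^ 2 + weightJ q μ 2 ^ 2 = scaleW q μ ^ 2 := by
  have hd : (0 : ℝ) < q - 1 := sub_pos.2 (by exact_mod_cast hq)
  have hm₁ := mJ_one_pos hq.pos hμ
  have hm₂ := mJ_two_pos hq.pos hμ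
  have hprod : μ = q * mJ q μ 1 * mJ q μ 2 := by
    rw [mul_assoc, mJ_one_mul_mJ_two hq.pos hμ.le]
    field_simp
  have swap : xJ q μ 2 / normJ q μ 1 ^ 2 + xJ q μ 1 / normJ q μ 2 ^ 2
      = (2 - q * (μ + 1)) / ((q : ℝ) - 1) := by
    rw [normJ_sq hq.pos, normJ_sq hq.pos, ← xJ_one_add_xJ_two q μ]
    exact div_add_sq_add_div_add_sq hd (xJ_one_mul_xJ_two hq.pos hμ.le)
  have scaled : μ * (weightJ q μ 1 ^ 2 + weightJ q μ 2 ^ 2)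
      = ((q : ℝ) - 1)⁻¹ - (2 - q * (μ + 1)) / ((q : ℝ) - 1) := by
    rw [← swap, ← inv_normJ_sq_add_inv_normJ_sq hq hμ.le]
    simp only [xJ]
    linear_combination (weightJ q μ 1 ^ 2 + weightJ q μ 2 ^ 2) * hprod
      + q * mJ q μ 2 * mJ_mul_weightJ_sq hm₁ + q * mJ q μ 1 * mJ_mul_weightJ_sq hm₂
  rw [scaleW_sq hq hμ, ← mul_right_inj' hμ.ne', scaled]
  field_simp
  ring

lemma xJ_mul_weightJ_sq_add (hq : 1 < q) (hμ : 0 < μ) :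
    xJ q μ 1 * weightJ q μ 1 ^ 2 + xJ q μ 2 * weightJ q μ 2 ^ 2 = 1 / μ := by
  calc xJ q μ 1 * weightJ q μ 1 ^ 2 + xJ q μ 2 * weightJ q μ 2 ^ 2
      = (weightJ q μ 1 ^ 2 + weightJ q μ 2 ^ 2)
          - q * (mJ q μ 1 * weightJ q μ 1 ^ 2 + mJ q μ 2 * weightJ q μ 2 ^ 2) := by
        simp only [xJ]
        ring
    _ = scaleW q μ ^ 2 - q * ((q : ℝ) - 1)⁻¹ := by
        rw [weightJ_one_sq_add_weightJ_two_sq hq hμ, mJ_mul_weightJ_sq (mJ_one_pos hq.pos hμ),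
          mJ_mul_weightJ_sq (mJ_two_pos hq.pos hμ), inv_normJ_sq_add_inv_normJ_sq hq hμ.le]
    _ = 1 / μ := by
        rw [scaleW_sq hq hμ]
        ring

lemma normJ_one_mul_normJ_two (hq : 1 < q) (hμ : 0 ≤ μ) :
    normJ q μ 1 * normJ q μ 2 = √((q : ℝ) - 1) * (xJ q μ 2 - xJ q μ 1) := by
  have hd : (0 : ℝ) ≤ q - 1 := sub_nonneg.2 (by exact_mod_cast hq.le)
  rw [normJ, normJ, sqrt_add_sq_mul_sqrt_add_sq hd (xJ_one_mul_xJ_two hq.pos hμ), abs_sub_comm,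
    abs_of_pos (sub_pos.2 (xJ_one_lt_xJ_two hq hμ))]

lemma xJ_sub_mul_weightJ_mul_weightJ (hq : 1 < q) (hμ : 0 < μ) :
    (xJ q μ 2 - xJ q μ 1) * (weightJ q μ 1 * weightJ q μ 2)
      = √((q : ℝ) / ((q : ℝ) - 1)) / √μ := by
  have hd : (0 : ℝ) < q - 1 := sub_pos.2 (by exact_mod_cast hq)
  have x_ne : xJ q μ 2 - xJ q μ 1 ≠ 0 := (sub_pos.2 (xJ_one_lt_xJ_two hq hμ.le)).ne'
  have hsqrt : √(mJ q μ 1) * √(mJ q μ 2) = √μ / √q := by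
    rw [← Real.sqrt_mul (mJ_one_pos hq.pos hμ).le, mJ_one_mul_mJ_two hq.pos hμ.le,
      Real.sqrt_div hμ.le]
  calc (xJ q μ 2 - xJ q μ 1) * (weightJ q μ 1 * weightJ q μ 2)
      = (xJ q μ 2 - xJ q μ 1) * ((√(mJ q μ 1) * √(mJ q μ 2))⁻¹
          / (normJ q μ 1 * normJ q μ 2)) := by
        rw [weightJ, weightJ, div_mul_div_comm, ← mul_inv]
    _ = √((q : ℝ) / ((q : ℝ) - 1)) / √μ := by
        rw [normJ_one_mul_normJ_two hq hμ.le, hsqrt, Real.sqrt_div q.cast_nonneg]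
        field_simp

end Weights

section TildeVectors

variable {V : Type*} [AddCommGroup V] [Module ℝ V] {q : ℕ} {μ : ℝ}

/-- The vector `u_{q-1} = m₁^{-1/2} (W₂₁ r̃ + W₂₂ s̃)`. -/
def uPenultimate (q : ℕ) (μ : ℝ) (r s : V) : V :=
  (√(mJ q μ 1))⁻¹ • (Wmat q μ 1 0 • r + Wmat q μ 1 1 • s)

/-- The vector `u_q = m₂^{-1/2} (W₁₁ r̃ + W₁₂ s̃)`. -/
def uLast (q : ℕ) (μ : ℝ) (r s : V) : V :=
  (√(mJ q μ 2))⁻¹ • (Wmat q μ 0 0 • r + Wmat q μ 0 1 • s)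

lemma inv_normJ_smul_uPenultimate (q : ℕ) (μ : ℝ) (r s : V) :
    (normJ q μ 1)⁻¹ • uPenultimate q μ r s
      = ((scaleW q μ)⁻¹ * weightJ q μ 1) • (weightJ q μ 1 • r - weightJ q μ 2 • s) := by
  have hW₁₀ : Wmat q μ 1 0 = (scaleW q μ)⁻¹ * weightJ q μ 1 := rfl
  have hW₁₁ : Wmat q μ 1 1 = (scaleW q μ)⁻¹ * -weightJ q μ 2 := rfl
  rw [uPenultimate, hW₁₀, hW₁₁]
  match_scalars <;> simp only [weightJ] <;> ring

lemma inv_normJ_smul_uLast (q : ℕ) (μ : ℝ) (r s : V) :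
    (normJ q μ 2)⁻¹ • uLast q μ r s
      = ((scaleW q μ)⁻¹ * weightJ q μ 2) • (weightJ q μ 2 • r + weightJ q μ 1 • s) := by
  have hW₀₀ : Wmat q μ 0 0 = (scaleW q μ)⁻¹ * weightJ q μ 2 := rfl
  have hW₀₁ : Wmat q μ 0 1 = (scaleW q μ)⁻¹ * weightJ q μ 1 := rfl
  rw [uLast, hW₀₀, hW₀₁]
  match_scalars <;> simp only [weightJ] <;> ring

lemma inv_normJ_smul_add (hq : 1 < q) (hμ : 0 < μ) (r s : V) :
    (normJ q μ 1)⁻¹ • uPenultimate q μ r s + (normJ q μ 2)⁻¹ • uLast q μ r s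
      = scaleW q μ • r := by
  have hC := (scaleW_pos hq hμ).ne'
  rw [inv_normJ_smul_uPenultimate, inv_normJ_smul_uLast]
  match_scalars
  · field_simp
    linear_combination weightJ_one_sq_add_weightJ_two_sq hq hμ
  · ring

lemma xJ_smul_inv_normJ_smul_add (hq : 1 < q) (hμ : 0 < μ) (r s : V) :
    xJ q μ 1 • (normJ q μ 1)⁻¹ • uPenultimate q μ r s
        + xJ q μ 2 • (normJ q μ 2)⁻¹ • uLast q μ r s
      = (scaleW q μ)⁻¹ • ((1 / μ) • r + (√((q : ℝ) / ((q : ℝ) - 1)) / √μ) • s) := by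
  rw [inv_normJ_smul_uPenultimate, inv_normJ_smul_uLast]
  match_scalars
  · linear_combination (scaleW q μ)⁻¹ * xJ_mul_weightJ_sq_add hq hμ
  · linear_combination (scaleW q μ)⁻¹ * xJ_sub_mul_weightJ_mul_weightJ hq hμ

end TildeVectors

section BilinearForms

variable {V : Type*} [AddCommGroup V] [Module ℝ V] (B : LinearMap.BilinForm ℝ V)

lemma sum_mul_bilin_left {κ : Type*} [Fintype κ] (c : κ → ℝ) (u : κ → V) (v : V) :
    ∑ m, c m * B (u m) v = B (∑ m, c m • u m) v := by
  simp [LinearMap.sum_apply]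

lemma sum_sum_mul_bilin {κ : Type*} [Fintype κ] (c : κ → ℝ) (u : κ → V) :
    ∑ m, ∑ m', c m * c m' * B (u m) (u m') = B (∑ m, c m • u m) (∑ m, c m • u m) := by
  rw [← sum_mul_bilin_left]
  simp only [map_sum, map_smul, smul_eq_mul, Finset.mul_sum, mul_assoc]

variable {B}

lemma weighted_bilin_eq_half_sub (hB : B.IsSymm) (x₁ x₂ N₁ N₂ : ℝ) (v₁ v₂ : V) :
    (x₂ ^ 2 - 1) / (2 * N₂ ^ 2) * B v₂ v₂ + (x₁ ^ 2 - 1) / (2 * N₁ ^ 2) * B v₁ v₁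
        + (x₁ * x₂ - 1) / (N₁ * N₂) * B v₂ v₁
      = 1 / 2 *
        (B (x₁ • N₁⁻¹ • v₁ + x₂ • N₂⁻¹ • v₂) (x₁ • N₁⁻¹ • v₁ + x₂ • N₂⁻¹ • v₂)
          - B (N₁⁻¹ • v₁ + N₂⁻¹ • v₂) (N₁⁻¹ • v₁ + N₂⁻¹ • v₂)) := by
  simp only [map_add, map_smul, LinearMap.add_apply, LinearMap.smul_apply, smul_eq_mul,
    hB.eq v₁ v₂]
  ring

lemma half_bilin_tilde_sub (hB : B.IsSymm) {κ μ C : ℝ} (hκ : 0 ≤ κ) (hμ : 0 < μ)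
    (hC : C ^ 2 = 1 / μ + κ) (r s : V) :
    1 / 2 *
        (B (C⁻¹ • ((1 / μ) • r + (√κ / √μ) • s)) (C⁻¹ • ((1 / μ) • r + (√κ / √μ) • s))
          - B (C • r) (C • r))
      = 1 / 2 * (1 + μ * κ)⁻¹ *
        (-(κ * (2 + μ * κ)) * B r r + κ * B s s + 2 / √μ * √κ * B r s) := by
  have hCinv : C⁻¹ ^ 2 = μ * (1 + μ * κ)⁻¹ := by
    rw [inv_pow, hC]
    field_simp
  have hratio : (√κ / √μ) ^ 2 = κ / μ := by
    rw [div_pow, Real.sq_sqrt hκ, Real.sq_sqrt hμ.le]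
  calc
    _ = 1 / 2 *
        (C⁻¹ ^ 2 * ((1 / μ) ^ 2 * B r r + (√κ / √μ) ^ 2 * B s s + 2 / μ * (√κ / √μ) * B r s)
          - C ^ 2 * B r r) := by
      simp only [map_add, map_smul, LinearMap.add_apply, LinearMap.smul_apply, smul_eq_mul,
        hB.eq s r]
      ring
    _ = _ := by
      rw [hCinv, hratio, hC]
      field_simp
      ring

theorem G_T_in_tilde_variables_general {ι κ : Type*} [Fintype κ] (hB : B.IsSymm)
    {q : ℕ} (hq : 2 ≤ q) {μ : ℝ} (hμ : 0 < μ) (c : ι → κ → ℝ) (u : κ → V) (r s : V) :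
    (∀ l, ∑ m, ∑ m', c l m * c l m' * B (u m) (u m')
        + 2 / normJ q μ 1 * ∑ m, c l m * B (u m) (uPenultimate q μ r s)
        + 2 / normJ q μ 2 * ∑ m, c l m * B (u m) (uLast q μ r s)
      = B (∑ m, c l m • u m) (∑ m, c l m • u m)
        + 2 * scaleW q μ * B (∑ m, c l m • u m) r) ∧
    (xJ q μ 2 ^ 2 - 1) / (2 * ((q : ℝ) - 1 + xJ q μ 2 ^ 2))
          * B (uLast q μ r s) (uLast q μ r s)
        + (xJ q μ 1 ^ 2 - 1) / (2 * ((q : ℝ) - 1 + xJ q μ 1 ^ 2))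
          * B (uPenultimate q μ r s) (uPenultimate q μ r s)
        + (xJ q μ 1 * xJ q μ 2 - 1) / (normJ q μ 1 * normJ q μ 2)
          * B (uLast q μ r s) (uPenultimate q μ r s)
      = 1 / 2 * (1 + μ * (q : ℝ) / ((q : ℝ) - 1))⁻¹ *
        (-((q : ℝ) / ((q : ℝ) - 1) * (2 + μ * (q : ℝ) / ((q : ℝ) - 1))) * B r r
          + (q : ℝ) / ((q : ℝ) - 1) * B s s
          + 2 / √μ * √((q : ℝ) / ((q : ℝ) - 1)) * B r s) := by
  have hq₀ : 0 < q := by omega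
  refine ⟨fun l => ?_, ?_⟩
  · rw [sum_sum_mul_bilin, sum_mul_bilin_left, sum_mul_bilin_left]
    have hy := congrArg (B (∑ m, c l m • u m)) (inv_normJ_smul_add hq hμ r s)
    simp only [map_add, map_smul, smul_eq_mul] at hy
    linear_combination 2 * hy
  · have one_le : (1 : ℝ) ≤ q := by exact_mod_cast hq₀
    have hκ : 0 ≤ (q : ℝ) / ((q : ℝ) - 1) := div_nonneg q.cast_nonneg (sub_nonneg.2 one_le)
    rw [← normJ_sq hq₀, ← normJ_sq hq₀, weighted_bilin_eq_half_sub hB, inv_normJ_smul_add hq hμ,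
      xJ_smul_inv_normJ_smul_add hq hμ, mul_div_assoc μ,
      half_bilin_tilde_sub hB hκ hμ (scaleW_sq hq hμ)]

end BilinearForms

/-- Corollary 4 of the paper.
With `u_{q−1} = m₁^{−1/2}(W₂₁ r̃ + W₂₂ s̃)` and `u_q = m₂^{−1/2}(W₁₁ r̃ + W₁₂ s̃)`,
and `w_l = Σ_{m=1}^{q−2} α_{m,l} u_m`, the quantities `G_l` and `T` become
`G_l = w_l·w_l + 2√(1/μ + q/(q−1)) w_l·r̃` and
`T = ½(1+μq/(q−1))⁻¹[ −(q/(q−1))(2+μq/(q−1)) r̃·r̃ + (q/(q−1)) s̃·s̃ + (2/√μ)√(q/(q−1)) r̃·s̃ ]`. -/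
theorem G_T_in_tilde_variables
    (q n : ℕ) (hq : 2 ≤ q) (hn : 1 ≤ n) (μ : ℝ) (hμ : 0 < μ)
    (u : Fin q → Fin n → ℝ) (rt st : Fin n → ℝ)
    (hu1 : ∀ i, u ⟨q - 2, by omega⟩ i =
      (Real.sqrt (mJ q μ 1))⁻¹ * (Wmat q μ 1 0 * rt i + Wmat q μ 1 1 * st i))
    (hu2 : ∀ i, u ⟨q - 1, by omega⟩ i =
      (Real.sqrt (mJ q μ 2))⁻¹ * (Wmat q μ 0 0 * rt i + Wmat q μ 0 1 * st i))
    -- `w_l = Σ_{m=1}^{q−2} α_{m,l} u_m`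
    (w : Fin q → Fin n → ℝ)
    (hw : ∀ l i, w l i = ∑ m : Fin q, omegaVec q l m * u m i)
    -- the quantity `G_l`
    (G : Fin q → ℝ)
    (hG : ∀ l, G l =
      (∑ m : Fin q, ∑ m' : Fin q, omegaVec q l m * omegaVec q l m' *
        ∑ i, u m i * u m' i)
      + (2 / Real.sqrt ((q : ℝ) - 1 + xJ q μ 1 ^ 2)) *
          ∑ m : Fin q, omegaVec q l m * ∑ i, u m i * u ⟨q - 2, by omega⟩ i
      + (2 / Real.sqrt ((q : ℝ) - 1 + xJ q μ 2 ^ 2)) *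
          ∑ m : Fin q, omegaVec q l m * ∑ i, u m i * u ⟨q - 1, by omega⟩ i)
    -- the quantity `T`
    (T : ℝ)
    (hT : T =
      ((xJ q μ 2 ^ 2 - 1) / (2 * ((q : ℝ) - 1 + xJ q μ 2 ^ 2))) *
        (∑ i, u ⟨q - 1, by omega⟩ i * u ⟨q - 1, by omega⟩ i)
      + ((xJ q μ 1 ^ 2 - 1) / (2 * ((q : ℝ) - 1 + xJ q μ 1 ^ 2))) *
        (∑ i, u ⟨q - 2, by omega⟩ i * u ⟨q - 2, by omega⟩ i)
      + ((xJ q μ 1 * xJ q μ 2 - 1) /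
          (Real.sqrt ((q : ℝ) - 1 + xJ q μ 1 ^ 2) * Real.sqrt ((q : ℝ) - 1 + xJ q μ 2 ^ 2))) *
        (∑ i, u ⟨q - 1, by omega⟩ i * u ⟨q - 2, by omega⟩ i)) :
    (∀ l : Fin q, G l =
      (∑ i, w l i * w l i)
      + 2 * Real.sqrt (1 / μ + (q : ℝ) / ((q : ℝ) - 1)) * ∑ i, w l i * rt i) ∧
    T = (1 / 2) * (1 + μ * (q : ℝ) / ((q : ℝ) - 1))⁻¹ *
      (-(((q : ℝ) / ((q : ℝ) - 1)) * (2 + μ * (q : ℝ) / ((q : ℝ) - 1))) * (∑ i, rt i * rt i)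
        + ((q : ℝ) / ((q : ℝ) - 1)) * (∑ i, st i * st i)
        + (2 / Real.sqrt μ) * Real.sqrt ((q : ℝ) / ((q : ℝ) - 1)) * (∑ i, rt i * st i)) := by
  obtain rfl : w = fun l => ∑ m, omegaVec q l m • u m := by
    ext l i
    simp [hw]
  have hu₁ : u ⟨q - 2, by omega⟩ = uPenultimate q μ rt st := funext hu1
  have hu₂ : u ⟨q - 1, by omega⟩ = uLast q μ rt st := funext hu2
  simp only [hu₁, hu₂] at hG hT
  obtain ⟨hG', hT'⟩ := G_T_in_tilde_variables_general (B := dotProductBilin ℝ ℝ)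
    ⟨dotProduct_comm⟩ hq hμ (omegaVec q) u rt st
  exact ⟨fun l => (hG l).trans (hG' l), hT.trans hT'⟩

end
end

section
/- For every natural number t, det(I + t·P) = 1 − μ·t(t+1)·q/(q−1). -/
open MeasureTheory ProbabilityTheory Real Finset Matrix

noncomputable section

/-- The matrix `Q_ℓ` with entries
`Q_{ℓ,mm'} = μ ω_{m,ℓ} ω_{m',ℓ} + √μ √(1+μq/(q−1)) (ω_{m,ℓ} δ_{m',q−1} + ω_{m',ℓ} δ_{m,q−1})`. -/
def Qmat (q : ℕ) (μ : ℝ) (l : Fin q) : Matrix (Fin q) (Fin q) ℝ :=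
  Matrix.of fun m m' =>
    μ * omegaVec q l m * omegaVec q l m'
    + Real.sqrt μ * Real.sqrt (1 + μ * (q : ℝ) / ((q : ℝ) - 1)) *
      (omegaVec q l m * (if (m' : ℕ) + 1 = q - 1 then 1 else 0)
        + omegaVec q l m' * (if (m : ℕ) + 1 = q - 1 then 1 else 0))

/-- The matrix `P` with entries `P_{mm'} = (1+μq/(q−1))⁻¹` times:
`μq/(q−1)` if `m=m'=q`; `−μq/(q−1)(2+μq/(q−1))` if `m=m'=q−1`;
`√μ √(q/(q−1))` if `{m,m'} = {q−1,q}`; `0` otherwise. -/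
def Pmat (q : ℕ) (μ : ℝ) : Matrix (Fin q) (Fin q) ℝ :=
  Matrix.of fun m m' =>
    (1 + μ * (q : ℝ) / ((q : ℝ) - 1))⁻¹ *
      (if (m : ℕ) + 1 = q ∧ (m' : ℕ) + 1 = q then μ * (q : ℝ) / ((q : ℝ) - 1)
       else if (m : ℕ) + 1 = q - 1 ∧ (m' : ℕ) + 1 = q - 1 then
         -(μ * (q : ℝ) / ((q : ℝ) - 1)) * (2 + μ * (q : ℝ) / ((q : ℝ) - 1))
       else if ((m : ℕ) + 1 = q ∧ (m' : ℕ) + 1 = q - 1) ∨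
               ((m : ℕ) + 1 = q - 1 ∧ (m' : ℕ) + 1 = q) then
         Real.sqrt μ * Real.sqrt ((q : ℝ) / ((q : ℝ) - 1))
       else 0)

/-!
Only the last two rows of `P` are nonzero, so by Sylvester's identity
`det (1 + X Y) = det (1 + Y X)` the determinant of `1 + t P` equals that of `1 + t B`, where `B` is
the trailing `2 × 2` block of `P`. This is `1 + t tr B + t² det B`, and both the trace and the
determinant of `B` equal `-μq/(q−1)`.
-/

theorem det_one_add_eq_det_one_add_submatrix {R m n : Type*} [CommRing R]
    [Fintype m] [DecidableEq m] [Fintype n] [DecidableEq n]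
    {e : m → n} (he : Function.Injective e) {A : Matrix n n R}
    (hA : ∀ i ∉ Set.range e, ∀ j, A i j = 0) :
    (1 + A).det = (1 + A.submatrix e e).det := by
  let U : Matrix n m R := (1 : Matrix n n R).submatrix id e
  have hUA : U * A.submatrix e id = A := by
    ext i j
    by_cases hi : i ∈ Set.range e
    · obtain ⟨k, rfl⟩ := hi
      simp [U, Matrix.mul_apply, Matrix.one_apply, he.eq_iff]
    · have hne : ∀ k, i ≠ e k := fun k hk => hi ⟨k, hk.symm⟩
      simp [U, Matrix.mul_apply, hne, hA i hi]
  have hAU : A.submatrix e id * U = A.submatrix e e := by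
    ext i j
    simp [U, Matrix.mul_apply, Matrix.one_apply]
  calc (1 + A).det = (1 + U * A.submatrix e id).det := by rw [hUA]
    _ = (1 + A.submatrix e id * U).det := Matrix.det_one_add_mul_comm _ _
    _ = (1 + A.submatrix e e).det := by rw [hAU]

theorem det_one_add_smul_fin_two {R : Type*} [CommRing R] (t : R) (B : Matrix (Fin 2) (Fin 2) R) :
    (1 + t • B).det = 1 + t * B.trace + t ^ 2 * B.det := by
  simp only [Matrix.det_fin_two, Matrix.trace_fin_two, Matrix.add_apply, Matrix.smul_apply,
    Matrix.one_apply_eq, Matrix.one_apply_ne zero_ne_one, Matrix.one_apply_ne one_ne_zero,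
    smul_eq_mul]
  ring

/-- The block of `P` on the indices `q − 1, q`, written in terms of `a = μq/(q−1)`; the
off-diagonal entry `√μ √(q/(q−1))` becomes `√a`. -/
def trailingBlock (a : ℝ) : Matrix (Fin 2) (Fin 2) ℝ :=
  (1 + a)⁻¹ • !![-a * (2 + a), √a; √a, a]

theorem trace_trailingBlock {a : ℝ} (ha : 1 + a ≠ 0) : (trailingBlock a).trace = -a := by
  simp only [trailingBlock, Matrix.trace_smul, Matrix.trace_fin_two_of, smul_eq_mul]
  field_simp
  ring

theorem det_trailingBlock {a : ℝ} (ha : 0 ≤ a) : (trailingBlock a).det = -a := by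
  have hdet : -a * (2 + a) * a - √a * √a = -a * (1 + a) ^ 2 := by
    rw [Real.mul_self_sqrt ha]
    ring
  have h_ne : 1 + a ≠ 0 := by positivity
  rw [trailingBlock, Matrix.det_smul, Matrix.det_fin_two_of, hdet, Fintype.card_fin]
  field_simp

theorem Pmat_apply_eq_zero_of_add_two_lt {q : ℕ} (μ : ℝ) {i : Fin q} (hi : (i : ℕ) + 2 < q)
    (j : Fin q) : Pmat q μ i j = 0 := by
  have h_last : (i : ℕ) + 1 ≠ q := by omega
  have h_prev : (i : ℕ) + 1 ≠ q - 1 := by omega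
  simp [Pmat, h_last, h_prev]

theorem Pmat_submatrix_natAdd (n : ℕ) (μ : ℝ) :
    (Pmat (n + 2) μ).submatrix (Fin.natAdd n) (Fin.natAdd n) =
      trailingBlock (μ * (n + 2 : ℕ) / ((n + 2 : ℕ) - 1)) := by
  have hratio : (0 : ℝ) ≤ (n + 2 : ℕ) / ((n + 2 : ℕ) - 1) :=
    div_nonneg (Nat.cast_nonneg _) (sub_nonneg.2 (Nat.one_le_cast.2 (by omega)))
  ext i j
  rw [trailingBlock, mul_div_assoc, Real.sqrt_mul' μ hratio]
  fin_cases i <;> fin_cases j <;> simp [Pmat, mul_div_assoc]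

theorem det_one_add_smul_Pmat_eq_trailingBlock (n : ℕ) (μ t : ℝ) :
    (1 + t • Pmat (n + 2) μ).det =
      (1 + t • trailingBlock (μ * (n + 2 : ℕ) / ((n + 2 : ℕ) - 1))).det := by
  have hrows : ∀ i ∉ Set.range (Fin.natAdd n : Fin 2 → Fin (n + 2)), ∀ j,
      (t • Pmat (n + 2) μ) i j = 0 := by
    intro i hi j
    rw [Fin.range_natAdd, Set.mem_ofPred_eq, not_le] at hi
    rw [Matrix.smul_apply, Pmat_apply_eq_zero_of_add_two_lt μ (by omega), smul_zero]
  rw [det_one_add_eq_det_one_add_submatrix (Fin.natAdd_injective 2 n) hrows,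
    Matrix.submatrix_smul, Pi.smul_apply, Pi.smul_apply, Pmat_submatrix_natAdd]

theorem det_I_add_smul_P_general {q : ℕ} (hq : 2 ≤ q) {μ : ℝ} (hμ : 0 ≤ μ) (t : ℝ) :
    (1 + t • Pmat q μ).det = 1 - μ * t * (t + 1) * q / (q - 1) := by
  obtain ⟨n, rfl⟩ := Nat.exists_eq_add_of_le' hq
  set a : ℝ := μ * (n + 2 : ℕ) / ((n + 2 : ℕ) - 1) with ha_def
  have ha : 0 ≤ a :=
    div_nonneg (by positivity) (sub_nonneg.2 (Nat.one_le_cast.2 (by omega)))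
  calc (1 + t • Pmat (n + 2) μ).det
      = (1 + t • trailingBlock a).det := det_one_add_smul_Pmat_eq_trailingBlock n μ t
    _ = 1 + t * -a + t ^ 2 * -a := by
        rw [det_one_add_smul_fin_two, trace_trailingBlock (by positivity), det_trailingBlock ha]
    _ = 1 - μ * t * (t + 1) * (n + 2 : ℕ) / ((n + 2 : ℕ) - 1) := by
        rw [ha_def]
        ring

/-- first determinant in the Proposition of the paper.
For every natural number `t`, `det(I + t·P) = 1 − μ t(t+1) q/(q−1)`. -/
theorem det_I_add_smul_P
    (q : ℕ) (hq : 2 ≤ q) (μ : ℝ) (hμ : 0 < μ) (t : ℕ) :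
    (1 + (t : ℝ) • Pmat q μ).det
      = 1 - μ * (t : ℝ) * ((t : ℝ) + 1) * (q : ℝ) / ((q : ℝ) - 1) := by
  exact det_I_add_smul_P_general hq hμ.le t

end
end

section
/- For every natural number t and every 1 ≤ ℓ ≤ q−1, det(I + t·Q_ℓ) = 1 − μ·t(t−1)·(q−2)/(q−1) − t²·μ²·q(q−2)/(q−1)². -/
open MeasureTheory ProbabilityTheory Real Finset Matrix

noncomputable section

/-!
`Q_ℓ` has rank at most two: it is built from `ω_ℓ` and the basis vector `e_{q-1}`, which is a unit
vector orthogonal to `ω_ℓ`. Sylvester's identity `det (1 + U V) = det (1 + V U)` therefore turns the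
determinant into a `2 × 2` one which depends on `ω_ℓ` only through `‖ω_ℓ‖²`. The vectors
`α_1, …, α_{q-2}` together with the normalised all-ones vector form an orthonormal basis of
`ℝ^{q-1}`, which explains the value `‖ω_ℓ‖² = 1 - 1 / (q - 1)`; it is obtained by induction on the
number `n` of vectors, whose squared `ℓ`-th coordinates sum to `n / (n + 1)` once `n ≥ ℓ - 1`.
-/

section RankTwo

variable {n R : Type*} [Fintype n] [DecidableEq n] [CommRing R]

theorem det_one_add_vecMulVec_add_vecMulVec (u₁ v₁ u₂ v₂ : n → R) :
    (1 + (vecMulVec u₁ v₁ + vecMulVec u₂ v₂)).det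
      = (1 + v₁ ⬝ᵥ u₁) * (1 + v₂ ⬝ᵥ u₂) - (v₁ ⬝ᵥ u₂) * (v₂ ⬝ᵥ u₁) := by
  have factor : vecMulVec u₁ v₁ + vecMulVec u₂ v₂ = (of ![u₁, u₂])ᵀ * of ![v₁, v₂] := by
    ext i j
    simp [mul_apply, Fin.sum_univ_two, vecMulVec_apply]
  have gram : of ![v₁, v₂] * (of ![u₁, u₂])ᵀ
      = !![v₁ ⬝ᵥ u₁, v₁ ⬝ᵥ u₂; v₂ ⬝ᵥ u₁, v₂ ⬝ᵥ u₂] := by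
    ext i j
    fin_cases i <;> fin_cases j <;> rfl
  rw [factor, det_one_add_mul_comm, gram, det_fin_two]
  simp

theorem det_one_add_smul_of_dotProduct_eq_zero {w e : n → R} (hwe : w ⬝ᵥ e = 0)
    (he : e ⬝ᵥ e = 1) (t a c : R) :
    (1 + t • (a • vecMulVec w w + c • (vecMulVec w e + vecMulVec e w))).det
      = 1 + t * a * (w ⬝ᵥ w) - t ^ 2 * c ^ 2 * (w ⬝ᵥ w) := by
  have regroup : t • (a • vecMulVec w w + c • (vecMulVec w e + vecMulVec e w))
      = vecMulVec w (t • (a • w + c • e)) + vecMulVec e ((t * c) • w) := by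
    simp only [vecMulVec_add, vecMulVec_smul]
    module
  have hew : e ⬝ᵥ w = 0 := by rw [dotProduct_comm, hwe]
  rw [regroup, det_one_add_vecMulVec_add_vecMulVec]
  simp only [smul_dotProduct, add_dotProduct, smul_eq_mul, hwe, hew, he]
  ring

end RankTwo

theorem alphaVec_sq (q i : ℕ) (k : Fin q) :
    alphaVec q i k ^ 2 =
      if (k : ℕ) < i then ((i : ℝ) * (i + 1))⁻¹
      else if (k : ℕ) = i then (i : ℝ) / (i + 1) else 0 := by
  rw [alphaVec, mul_pow, inv_pow, Real.sq_sqrt (by positivity)]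
  simp only [add_lt_add_iff_right, add_left_inj]
  split_ifs
  · simp
  · rcases eq_or_ne (i : ℝ) 0 with hi | hi
    · simp [hi]
    · field_simp
  · simp

theorem sum_range_alphaVec_sq (q n : ℕ) (k : Fin q) :
    ∑ i ∈ range n, alphaVec q (i + 1) k ^ 2 = if (k : ℕ) ≤ n then (n : ℝ) / (n + 1) else 0 := by
  induction n with
  | zero => simp
  | succ n ih =>
    rw [sum_range_succ, ih, alphaVec_sq]
    rcases lt_trichotomy (k : ℕ) (n + 1) with hk | hk | hk
    · rw [if_pos (by omega), if_pos hk, if_pos hk.le]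
      push_cast
      field_simp
      ring
    · simp [hk]
    · rw [if_neg (by omega), if_neg (by omega), if_neg (by omega), if_neg (by omega), add_zero]

theorem omegaVec_dotProduct_self_eq_sum (q : ℕ) (l : Fin q) :
    omegaVec q l ⬝ᵥ omegaVec q l = ∑ i ∈ range (q - 2), alphaVec q (i + 1) l ^ 2 := by
  have filter_eq : {i ∈ range q | i < q - 2} = range (q - 2) := by
    ext i
    simp only [mem_filter, mem_range]
    omega
  calc omegaVec q l ⬝ᵥ omegaVec q l
      = ∑ m : Fin q, if (m : ℕ) < q - 2 then alphaVec q (m + 1) l ^ 2 else 0 := by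
        simp only [dotProduct, omegaVec, ← sq, ite_pow, zero_pow two_ne_zero]
    _ = ∑ i ∈ range q, if i < q - 2 then alphaVec q (i + 1) l ^ 2 else 0 :=
        Fin.sum_univ_eq_sum_range (fun i ↦ if i < q - 2 then alphaVec q (i + 1) l ^ 2 else 0) q
    _ = ∑ i ∈ range (q - 2), alphaVec q (i + 1) l ^ 2 := by rw [← sum_filter, filter_eq]

theorem omegaVec_dotProduct_self {q : ℕ} {l : Fin q} (hl : (l : ℕ) < q - 1) :
    omegaVec q l ⬝ᵥ omegaVec q l = ((q : ℝ) - 2) / ((q : ℝ) - 1) := by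
  rw [omegaVec_dotProduct_self_eq_sum, sum_range_alphaVec_sq, if_pos (by omega),
    Nat.cast_sub (by omega)]
  push_cast
  ring

theorem omegaVec_apply_eq_zero {q : ℕ} (l : Fin q) {m : Fin q} (hm : q - 2 ≤ (m : ℕ)) :
    omegaVec q l m = 0 :=
  if_neg hm.not_gt

theorem Qmat_eq_vecMulVec {q : ℕ} (μ : ℝ) (l : Fin q) {p : Fin q} (hp : (p : ℕ) + 1 = q - 1) :
    Qmat q μ l = μ • vecMulVec (omegaVec q l) (omegaVec q l)
      + (√μ * √(1 + μ * q / ((q : ℝ) - 1))) •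
        (vecMulVec (omegaVec q l) (Pi.single p 1) + vecMulVec (Pi.single p 1) (omegaVec q l)) := by
  have single_apply (m : Fin q) :
      (Pi.single p 1 : Fin q → ℝ) m = if (m : ℕ) + 1 = q - 1 then 1 else 0 := by
    simp only [Pi.single_apply, Fin.ext_iff, ← hp, add_left_inj]
  ext m m'
  simp only [Qmat, of_apply, Matrix.add_apply, Matrix.smul_apply, vecMulVec_apply, smul_eq_mul,
    single_apply]
  ring

theorem det_I_add_smul_Q_general {q : ℕ} {μ : ℝ} (hμ : 0 ≤ μ) (t : ℝ) {l : Fin q}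
    (hl : (l : ℕ) < q - 1) :
    (1 + t • Qmat q μ l).det
      = 1 - μ * t * (t - 1) * ((q : ℝ) - 2) / ((q : ℝ) - 1)
        - t ^ 2 * μ ^ 2 * (q : ℝ) * ((q : ℝ) - 2) / ((q : ℝ) - 1) ^ 2 := by
  obtain ⟨p, hp⟩ : ∃ p : Fin q, (p : ℕ) + 1 = q - 1 := ⟨⟨q - 2, by omega⟩, by grind⟩
  have orthogonal : omegaVec q l ⬝ᵥ Pi.single p 1 = 0 := by
    rw [dotProduct_single_one, omegaVec_apply_eq_zero l (by omega)]
  have unit : (Pi.single p 1 : Fin q → ℝ) ⬝ᵥ Pi.single p 1 = 1 := by simp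
  have q_sub_one_pos : 0 < (q : ℝ) - 1 := sub_pos.2 (Nat.one_lt_cast.2 (by omega))
  have radicand_nonneg : 0 ≤ 1 + μ * q / ((q : ℝ) - 1) := by positivity
  rw [Qmat_eq_vecMulVec μ l hp, det_one_add_smul_of_dotProduct_eq_zero orthogonal unit,
    omegaVec_dotProduct_self hl, mul_pow, Real.sq_sqrt hμ, Real.sq_sqrt radicand_nonneg]
  field_simp
  ring

/-- second determinant in the Proposition of the paper.
For every natural number `t` and every `1 ≤ ℓ ≤ q−1`,
`det(I + t·Q_ℓ) = 1 − μ t(t−1)(q−2)/(q−1) − t² μ² q(q−2)/(q−1)²`. -/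
theorem det_I_add_smul_Q
    (q : ℕ) (hq : 2 ≤ q) (μ : ℝ) (hμ : 0 < μ) (t : ℕ)
    (l : Fin q) (hl : (l : ℕ) < q - 1) :
    (1 + (t : ℝ) • Qmat q μ l).det
      = 1 - μ * (t : ℝ) * ((t : ℝ) - 1) * ((q : ℝ) - 2) / ((q : ℝ) - 1)
        - (t : ℝ) ^ 2 * μ ^ 2 * (q : ℝ) * ((q : ℝ) - 2) / ((q : ℝ) - 1) ^ 2 :=
  det_I_add_smul_Q_general hμ.le t hl

end
end

section
/- Regarding 𝒵_1 and 𝒵_2 as functions of μ (with q, n fixed), there exist constants C > 0 and δ ∈ (0,1) such that for all μ ∈ (0,δ): | 𝒵_1 + n·μ/(q−1) | ≤ C·μ² and | 𝒵_2 − (n/2)·μ/(q(q−1)) | ≤ C·μ²; that is, 𝒵_1 = −(n/(q−1))·μ + O(μ²) and 𝒵_2 = ((n/2)/(q(q−1)))·μ + O(μ²) as μ → 0⁺. -/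
open MeasureTheory ProbabilityTheory Real Finset Matrix

noncomputable section

/-- The quadratic form `âᵀAâ = Σ_{m,m'} A_{mm'} a_m·a_{m'}` on `(ℝⁿ)^q`. -/
def quadForm (q n : ℕ) (A : Matrix (Fin q) (Fin q) ℝ) (a : Fin q → Fin n → ℝ) : ℝ :=
  ∑ m : Fin q, ∑ m' : Fin q, A m m' * ∑ i, a m i * a m' i

/-- `Z(â) = 1 − q⁻¹ Σ_{ℓ=1}^{q−1} exp(−½ âᵀQ_ℓâ) − q⁻¹ exp(−½ âᵀPâ)`. -/
def Zfun (q n : ℕ) (μ : ℝ) (a : Fin q → Fin n → ℝ) : ℝ :=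
  1 - (1 / (q : ℝ)) * ∑ l ∈ Finset.univ.filter (fun l : Fin q => (l : ℕ) < q - 1),
        Real.exp (-(1 / 2) * quadForm q n (Qmat q μ l) a)
    - (1 / (q : ℝ)) * Real.exp (-(1 / 2) * quadForm q n (Pmat q μ) a)

/-- The law of `â` where all `nq` real components are i.i.d. standard normal. -/
def stdGaussPi (q n : ℕ) : Measure (Fin q → Fin n → ℝ) :=
  Measure.pi fun _ : Fin q => Measure.pi fun _ : Fin n => gaussianReal 0 1

/-- `𝒵_k = (1/k)·E_a[Z^k]`. -/
def calZ (q n : ℕ) (μ : ℝ) (k : ℕ) : ℝ :=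
  (1 / (k : ℝ)) * ∫ a : Fin q → Fin n → ℝ, (Zfun q n μ a) ^ k ∂(stdGaussPi q n)

/-!
Write `s = √μ`. Negating the vector `a_{q-1}` preserves the Gaussian law, and it splits each
exponent `½ âᵀQ_ℓâ`, `½ âᵀPâ` into an even part `x` of size `O(s²)` and an odd part `y` of size
`O(s)`. Expanding `1 - exp (-(x + y))` to third order and averaging over this symmetry removes all
odd powers of `s`, so that, with `𝔼` the average over the `q` exponents,
`E[Z] = E[𝔼 (x - y²/2)] + O(μ²)` and `E[Z²] = E[(𝔼 y)²] + O(μ²)`.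
The right-hand sides are Gaussian moments, given by the traces of the matrices and by their entries
in row and column `q - 1`. For each `Q_ℓ` the contributions of `x` and `y²/2` cancel to first order,
and in `𝔼 y` the matrices `Q_ℓ` drop out since `Σ_ℓ ω_{m,ℓ} = 0`; only `P` contributes at order `μ`.
-/

open scoped BigOperators

section Expansion

lemma abs_exp_sub_sum_le (x : ℝ) (n : ℕ) :
    |Real.exp x - ∑ m ∈ range n, x ^ m / (m.factorial : ℝ)| ≤ |x| ^ n * Real.exp |x| := by
  have h := Complex.norm_exp_sub_sum_le_norm_mul_exp (x : ℂ) n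
  have hcast : Complex.exp (x : ℂ) - ∑ m ∈ range n, (x : ℂ) ^ m / (m.factorial : ℂ)
      = ((Real.exp x - ∑ m ∈ range n, x ^ m / (m.factorial : ℝ) : ℝ) : ℂ) := by
    push_cast; rfl
  rwa [hcast, Complex.norm_real, Complex.norm_real] at h

/-- The regime in which `exp (-(x + y))` and `exp (-(x - y))` are expanded in a small parameter
`s`: `x` has order `s ^ 2`, `y` has order `s`, and one number `B` serves both as the implied
constant and as a bound for the exponential factor in the Taylor remainder. -/
structure PerturbationBound (s B x y : ℝ) : Prop where
  nonneg : 0 ≤ s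
  le_one : s ≤ 1
  one_le : 1 ≤ B
  abs_even_le : |x| ≤ s ^ 2 * B
  abs_odd_le : |y| ≤ s * B
  exp_le : Real.exp (|x| + |y|) ≤ B

namespace PerturbationBound

variable {s B x y : ℝ}

lemma neg_odd (h : PerturbationBound s B x y) : PerturbationBound s B x (-y) where
  __ := h
  abs_odd_le := (abs_neg y).trans_le h.abs_odd_le
  exp_le := by simpa only [abs_neg] using h.exp_le

lemma pow_mul_pow_le (h : PerturbationBound s B x y) {i j k l : ℕ} (hi : k ≤ i) (hj : j ≤ l) :
    s ^ i * B ^ j ≤ s ^ k * B ^ l :=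
  mul_le_mul (pow_le_pow_of_le_one h.nonneg h.le_one hi) (pow_le_pow_right₀ h.one_le hj)
    (pow_nonneg (zero_le_one.trans h.one_le) _) (pow_nonneg h.nonneg _)

lemma abs_pow_mul_pow_le (h : PerturbationBound s B x y) (i j : ℕ) :
    |x ^ i * y ^ j| ≤ s ^ (2 * i + j) * B ^ (i + j) := by
  have hB : 0 ≤ B := zero_le_one.trans h.one_le
  have hx := h.abs_even_le
  have hy := h.abs_odd_le
  calc |x ^ i * y ^ j| = |x| ^ i * |y| ^ j := by rw [abs_mul, abs_pow, abs_pow]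
    _ ≤ (s ^ 2 * B) ^ i * (s * B) ^ j := by gcongr
    _ = s ^ (2 * i + j) * B ^ (i + j) := by ring

lemma abs_one_sub_exp_neg_le (h : PerturbationBound s B x y) : |1 - Real.exp (-(x + y))| ≤ B := by
  have hexp : Real.exp (-(x + y)) ≤ B := by
    refine (Real.exp_le_exp.2 ?_).trans h.exp_le
    linarith [neg_abs_le x, neg_abs_le y]
  have hpos := Real.exp_pos (-(x + y))
  have hB := h.one_le
  exact abs_le.2 ⟨by linarith, by linarith⟩

lemma abs_cubic_remainder_le (h : PerturbationBound s B x y) :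
    |1 - Real.exp (-(x + y)) - ((x + y) - (x + y) ^ 2 / 2 + (x + y) ^ 3 / 6)|
      ≤ 16 * (s ^ 4 * B ^ 5) := by
  have hsize : |x + y| ≤ 2 * (s * B) := by
    have hx : |x| ≤ s * B := by
      simpa using (h.abs_pow_mul_pow_le 1 0).trans
        (h.pow_mul_pow_le (k := 1) (l := 1) one_le_two le_rfl)
    linarith [abs_add_le x y, h.abs_odd_le]
  have hexp : Real.exp |x + y| ≤ B := (Real.exp_le_exp.2 (abs_add_le x y)).trans h.exp_le
  have htaylor := abs_exp_sub_sum_le (-(x + y)) 4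
  rw [abs_neg] at htaylor
  calc _ = |Real.exp (-(x + y)) - ∑ m ∈ range 4, (-(x + y)) ^ m / (m.factorial : ℝ)| := by
        rw [← abs_neg]
        simp only [sum_range_succ, sum_range_zero, Nat.factorial]
        congr 1; push_cast; ring
    _ ≤ |x + y| ^ 4 * Real.exp |x + y| := htaylor
    _ ≤ (2 * (s * B)) ^ 4 * B := by gcongr
    _ = 16 * (s ^ 4 * B ^ 5) := by ring

lemma abs_even_part_sub_le (h : PerturbationBound s B x y) :
    |((1 - Real.exp (-(x + y))) + (1 - Real.exp (-(x + -y)))) / 2 - (x - y ^ 2 / 2)|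
      ≤ 18 * (s ^ 4 * B ^ 5) := by
  have hR := h.abs_cubic_remainder_le
  have hR' := h.neg_odd.abs_cubic_remainder_le
  have hxx := (h.abs_pow_mul_pow_le 2 0).trans (h.pow_mul_pow_le (k := 4) (l := 5) le_rfl (by simp))
  have hxxx := (h.abs_pow_mul_pow_le 3 0).trans
    (h.pow_mul_pow_le (k := 4) (l := 5) (by simp) (by simp))
  have hxyy := (h.abs_pow_mul_pow_le 1 2).trans
    (h.pow_mul_pow_le (k := 4) (l := 5) le_rfl (by simp))
  rw [abs_le] at *
  constructor <;> linarith

lemma abs_odd_part_sub_le (h : PerturbationBound s B x y) :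
    |((1 - Real.exp (-(x + y))) - (1 - Real.exp (-(x + -y)))) / 2 - y|
      ≤ 18 * (s ^ 3 * B ^ 5) := by
  have hR := h.abs_cubic_remainder_le
  have hR' := h.neg_odd.abs_cubic_remainder_le
  have hs := h.pow_mul_pow_le (i := 4) (j := 5) (k := 3) (l := 5) (by simp) le_rfl
  have hxy := (h.abs_pow_mul_pow_le 1 1).trans
    (h.pow_mul_pow_le (k := 3) (l := 5) le_rfl (by simp))
  have hxxy := (h.abs_pow_mul_pow_le 2 1).trans
    (h.pow_mul_pow_le (k := 3) (l := 5) (by simp) (by simp))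
  have hyyy := (h.abs_pow_mul_pow_le 0 3).trans
    (h.pow_mul_pow_le (k := 3) (l := 5) le_rfl (by simp))
  rw [abs_le] at *
  constructor <;> linarith

lemma abs_leading_term_le (h : PerturbationBound s B x y) :
    |x - y ^ 2 / 2| ≤ 2 * (s ^ 2 * B ^ 2) := by
  have hx := (h.abs_pow_mul_pow_le 1 0).trans
    (h.pow_mul_pow_le (k := 2) (l := 2) le_rfl (by simp))
  have hyy : |x ^ 0 * y ^ 2| ≤ s ^ 2 * B ^ 2 := h.abs_pow_mul_pow_le 0 2
  rw [abs_le] at *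
  constructor <;> linarith

end PerturbationBound

lemma abs_expect_le_of_forall {ι : Type*} [Fintype ι] [Nonempty ι] {f : ι → ℝ} {b : ℝ}
    (h : ∀ j, |f j| ≤ b) : |𝔼 j, f j| ≤ b :=
  (abs_expect_le _ _).trans (expect_le univ_nonempty fun j _ => h j)

/-- The average of `1 - exp (-h j)` over `j`; the function `Z` has this shape. -/
def meanExpGap {ι : Type*} [Fintype ι] (h : ι → ℝ) : ℝ := 𝔼 j, (1 - Real.exp (-h j))

section Mean

variable {ι : Type*} [Fintype ι] [Nonempty ι] {s B : ℝ} {x y : ι → ℝ}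

lemma abs_meanExpGap_le (h : ∀ j, PerturbationBound s B (x j) (y j)) :
    |meanExpGap (x + y)| ≤ B :=
  abs_expect_le_of_forall fun j => (h j).abs_one_sub_exp_neg_le

lemma abs_meanExpGap_even_part_sub_le (h : ∀ j, PerturbationBound s B (x j) (y j)) :
    |(meanExpGap (x + y) + meanExpGap (x + -y)) / 2 - 𝔼 j, (x j - y j ^ 2 / 2)|
      ≤ 18 * (s ^ 4 * B ^ 5) := by
  rw [meanExpGap, meanExpGap, ← expect_add_distrib, expect_div, ← expect_sub_distrib]
  exact abs_expect_le_of_forall fun j => (h j).abs_even_part_sub_le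

lemma abs_meanExpGap_odd_part_sub_le (h : ∀ j, PerturbationBound s B (x j) (y j)) :
    |(meanExpGap (x + y) - meanExpGap (x + -y)) / 2 - 𝔼 j, y j| ≤ 18 * (s ^ 3 * B ^ 5) := by
  rw [meanExpGap, meanExpGap, ← expect_sub_distrib, expect_div, ← expect_sub_distrib]
  exact abs_expect_le_of_forall fun j => (h j).abs_odd_part_sub_le

lemma abs_expect_leading_term_le (h : ∀ j, PerturbationBound s B (x j) (y j)) :
    |𝔼 j, (x j - y j ^ 2 / 2)| ≤ 2 * (s ^ 2 * B ^ 2) :=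
  abs_expect_le_of_forall fun j => (h j).abs_leading_term_le

lemma abs_expect_odd_le (h : ∀ j, PerturbationBound s B (x j) (y j)) : |𝔼 j, y j| ≤ s * B :=
  abs_expect_le_of_forall fun j => (h j).abs_odd_le

lemma abs_meanExpGap_sq_even_part_sub_le (h : ∀ j, PerturbationBound s B (x j) (y j)) :
    |(meanExpGap (x + y) ^ 2 + meanExpGap (x + -y) ^ 2) / 2 - (𝔼 j, y j) ^ 2|
      ≤ 760 * (s ^ 4 * B ^ 10) := by
  have hj := h (Classical.arbitrary ι)
  have hs := hj.nonneg
  have hB : 0 ≤ B := zero_le_one.trans hj.one_le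
  set E := (meanExpGap (x + y) + meanExpGap (x + -y)) / 2 with hE
  set O := (meanExpGap (x + y) - meanExpGap (x + -y)) / 2 with hO
  set X := 𝔼 j, (x j - y j ^ 2 / 2)
  set Y := 𝔼 j, y j
  have hEX : |E - X| ≤ 18 * (s ^ 4 * B ^ 5) := abs_meanExpGap_even_part_sub_le h
  have hOY : |O - Y| ≤ 18 * (s ^ 3 * B ^ 5) := abs_meanExpGap_odd_part_sub_le h
  have hX : |X| ≤ 2 * (s ^ 2 * B ^ 2) := abs_expect_leading_term_le h
  have hY : |Y| ≤ s ^ 1 * B ^ 1 := by simpa using abs_expect_odd_le h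
  have hE_le : |E| ≤ 20 * (s ^ 2 * B ^ 5) := by
    have h42 := hj.pow_mul_pow_le (i := 4) (j := 5) (k := 2) (l := 5) (by simp) le_rfl
    have h22 := hj.pow_mul_pow_le (i := 2) (j := 2) (k := 2) (l := 5) le_rfl (by simp)
    linarith [abs_sub_abs_le_abs_sub E X]
  have hOY_add : |O + Y| ≤ 20 * (s * B ^ 5) := by
    have h31 := hj.pow_mul_pow_le (i := 3) (j := 5) (k := 1) (l := 5) (by simp) le_rfl
    have h11 := hj.pow_mul_pow_le (i := 1) (j := 1) (k := 1) (l := 5) le_rfl (by simp)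
    rw [pow_one s] at h31 h11 hY
    rw [abs_le] at *
    constructor <;> linarith
  calc _ = |E * E + (O + Y) * (O - Y)| := by rw [hE, hO]; congr 1; ring
    _ ≤ |E| * |E| + |O + Y| * |O - Y| := by
        simpa only [abs_mul] using abs_add_le (E * E) ((O + Y) * (O - Y))
    _ ≤ 20 * (s ^ 2 * B ^ 5) * (20 * (s ^ 2 * B ^ 5))
          + 20 * (s * B ^ 5) * (18 * (s ^ 3 * B ^ 5)) := by gcongr
    _ = 760 * (s ^ 4 * B ^ 10) := by ring

end Mean

end Expansion

section Symmetrization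

variable {Ω : Type*} [MeasurableSpace Ω] {P : Measure Ω} {T : Ω → Ω}

lemma integral_comp_measurePreserving (hT : MeasurePreserving T P P) {f : Ω → ℝ}
    (hf : AEStronglyMeasurable f P) : ∫ ω, f (T ω) ∂P = ∫ ω, f ω ∂P := by
  rw [← integral_map hT.aemeasurable (hT.map_eq.symm ▸ hf), hT.map_eq]

lemma abs_integral_sub_integral_le_of_symmetrized (hT : MeasurePreserving T P P) {F G b : Ω → ℝ}
    (hF : Integrable F P) (hG : Integrable G P) (hb : Integrable b P)
    (h : ∀ ω, |(F ω + F (T ω)) / 2 - G ω| ≤ b ω) :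
    |(∫ ω, F ω ∂P) - ∫ ω, G ω ∂P| ≤ ∫ ω, b ω ∂P := by
  have hFT : Integrable (fun ω => F (T ω)) P := hT.integrable_comp_of_integrable hF
  have hinv := integral_comp_measurePreserving hT hF.1
  have hmean : Integrable (fun ω => (F ω + F (T ω)) / 2) P := (hF.add hFT).div_const 2
  have hsym : (∫ ω, F ω ∂P) - ∫ ω, G ω ∂P = ∫ ω, ((F ω + F (T ω)) / 2 - G ω) ∂P := by
    rw [integral_sub hmean hG, integral_div, integral_add hF hFT, hinv]
    ring
  rw [hsym, ← Real.norm_eq_abs]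
  exact norm_integral_le_of_norm_le hb (Filter.Eventually.of_forall h)

lemma integral_eq_zero_of_comp_eq_neg (hT : MeasurePreserving T P P) {f : Ω → ℝ}
    (hf : AEStronglyMeasurable f P) (hneg : ∀ ω, f (T ω) = -f ω) : ∫ ω, f ω ∂P = 0 := by
  have hinv := integral_comp_measurePreserving hT hf
  simp only [hneg, integral_neg] at hinv
  linarith

variable {ι : Type*}

lemma measurable_expect [Fintype ι] {f : Ω → ι → ℝ} (hf : ∀ j, Measurable fun ω => f ω j) :
    Measurable fun ω => 𝔼 j, f ω j := by
  simp only [Fintype.expect_eq_sum_div_card]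
  fun_prop

lemma measurable_meanExpGap [Fintype ι] : Measurable (meanExpGap : (ι → ℝ) → ℝ) :=
  measurable_expect fun j => by fun_prop

/-- Random families `x`, `y` satisfying `PerturbationBound` with a random `B`, where `x` is even and
`y` is odd under a symmetry `T` of the probability space. -/
structure SymmetricPerturbation (P : Measure Ω) (T : Ω → Ω) (s : ℝ) (B : Ω → ℝ)
    (x y : Ω → ι → ℝ) : Prop where
  measurePreserving : MeasurePreserving T P P
  even : ∀ ω, x (T ω) = x ω
  odd : ∀ ω, y (T ω) = -y ω
  measurable_even : Measurable x
  measurable_odd : Measurable y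
  bound : ∀ ω j, PerturbationBound s (B ω) (x ω j) (y ω j)
  integrable_pow : Integrable (fun ω => B ω ^ 10) P

namespace SymmetricPerturbation

variable {s : ℝ} {B : Ω → ℝ} {x y : Ω → ι → ℝ}

lemma pow_mul_pow_le [Nonempty ι] (h : SymmetricPerturbation P T s B x y) (ω : Ω) {i j k l : ℕ}
    (hi : k ≤ i) (hj : j ≤ l) : s ^ i * B ω ^ j ≤ s ^ k * B ω ^ l :=
  (h.bound ω (Classical.arbitrary ι)).pow_mul_pow_le hi hj

lemma measurable_meanExpGap_add [Fintype ι] (h : SymmetricPerturbation P T s B x y) :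
    Measurable fun ω => meanExpGap (x ω + y ω) :=
  measurable_meanExpGap.comp (h.measurable_even.add h.measurable_odd)

variable [Fintype ι] [Nonempty ι]

lemma abs_integral_meanExpGap_sub_le (h : SymmetricPerturbation P T s B x y) :
    |(∫ ω, meanExpGap (x ω + y ω) ∂P) - ∫ ω, 𝔼 j, (x ω j - y ω j ^ 2 / 2) ∂P|
      ≤ 18 * s ^ 4 * ∫ ω, B ω ^ 10 ∂P := by
  have hF : Integrable (fun ω => meanExpGap (x ω + y ω)) P :=
    h.integrable_pow.mono' h.measurable_meanExpGap_add.aestronglyMeasurable <|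
      Filter.Eventually.of_forall fun ω => (abs_meanExpGap_le (h.bound ω)).trans <| by
        simpa using h.pow_mul_pow_le ω (i := 0) (j := 1) (k := 0) (l := 10) le_rfl (by simp)
  have hG_meas : Measurable fun ω => 𝔼 j, (x ω j - y ω j ^ 2 / 2) :=
    have hx := h.measurable_even
    have hy := h.measurable_odd
    measurable_expect fun j => by fun_prop
  have hG : Integrable (fun ω => 𝔼 j, (x ω j - y ω j ^ 2 / 2)) P :=
    (h.integrable_pow.const_mul 2).mono' hG_meas.aestronglyMeasurable <|
      Filter.Eventually.of_forall fun ω => (abs_expect_leading_term_le (h.bound ω)).trans <| by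
        simpa using h.pow_mul_pow_le ω (i := 2) (j := 2) (k := 0) (l := 10) (by simp) (by simp)
  rw [← integral_const_mul]
  refine abs_integral_sub_integral_le_of_symmetrized h.measurePreserving hF hG
    (h.integrable_pow.const_mul _) fun ω => ?_
  rw [h.even, h.odd, mul_assoc]
  exact (abs_meanExpGap_even_part_sub_le (h.bound ω)).trans <|
    mul_le_mul_of_nonneg_left (h.pow_mul_pow_le ω le_rfl (by simp)) (by simp)

lemma abs_integral_meanExpGap_sq_sub_le (h : SymmetricPerturbation P T s B x y) :
    |(∫ ω, meanExpGap (x ω + y ω) ^ 2 ∂P) - ∫ ω, (𝔼 j, y ω j) ^ 2 ∂P|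
      ≤ 760 * s ^ 4 * ∫ ω, B ω ^ 10 ∂P := by
  have hF : Integrable (fun ω => meanExpGap (x ω + y ω) ^ 2) P := by
    refine h.integrable_pow.mono' (h.measurable_meanExpGap_add.pow_const 2).aestronglyMeasurable
      (Filter.Eventually.of_forall fun ω => ?_)
    rw [norm_pow]
    refine (pow_le_pow_left₀ (norm_nonneg _) (abs_meanExpGap_le (h.bound ω)) 2).trans ?_
    simpa using h.pow_mul_pow_le ω (i := 0) (j := 2) (k := 0) (l := 10) le_rfl (by simp)
  have hG_meas : Measurable fun ω => 𝔼 j, y ω j :=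
    measurable_expect fun j => (measurable_pi_apply j).comp h.measurable_odd
  have hG : Integrable (fun ω => (𝔼 j, y ω j) ^ 2) P := by
    refine h.integrable_pow.mono' (hG_meas.pow_const 2).aestronglyMeasurable
      (Filter.Eventually.of_forall fun ω => ?_)
    rw [norm_pow]
    refine (pow_le_pow_left₀ (norm_nonneg _) (abs_expect_odd_le (h.bound ω)) 2).trans ?_
    simpa [mul_pow] using
      h.pow_mul_pow_le ω (i := 2) (j := 2) (k := 0) (l := 10) (by simp) (by simp)
  rw [← integral_const_mul]
  refine abs_integral_sub_integral_le_of_symmetrized h.measurePreserving hF hG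
    (h.integrable_pow.const_mul _) fun ω => ?_
  rw [h.even, h.odd, mul_assoc]
  exact abs_meanExpGap_sq_even_part_sub_le (h.bound ω)

end SymmetricPerturbation

lemma integral_expect [Fintype ι] {f : ι → Ω → ℝ} (hf : ∀ j, Integrable (f j) P) :
    ∫ ω, 𝔼 j, f j ω ∂P = 𝔼 j, ∫ ω, f j ω ∂P := by
  simp only [Fintype.expect_eq_sum_div_card]
  rw [integral_div, integral_finsetSum _ fun j _ => hf j]

end Symmetrization

section ProductMeasure

variable {ι E : Type*} [Fintype ι] [MeasurableSpace E]

lemma measurePreserving_update_neg [DecidableEq ι] [Neg E] {ν : ι → Measure E}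
    [∀ i, SigmaFinite (ν i)] (k : ι) (hk : MeasurePreserving Neg.neg (ν k) (ν k)) :
    MeasurePreserving (fun a : ι → E => Function.update a k (-a k))
      (Measure.pi ν) (Measure.pi ν) := by
  have hcoord : ∀ i, MeasurePreserving (if i = k then Neg.neg else id) (ν i) (ν i) := by
    intro i
    split_ifs with hik
    · exact hik ▸ hk
    · exact .id _
  convert measurePreserving_pi ν ν hcoord using 2 with a
  ext i
  by_cases hik : i = k
  · subst hik; simp
  · simp [hik]

lemma measurePreserving_neg_pi [Neg E] {ν : ι → Measure E} [∀ i, SigmaFinite (ν i)]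
    (h : ∀ i, MeasurePreserving Neg.neg (ν i) (ν i)) :
    MeasurePreserving Neg.neg (Measure.pi ν) (Measure.pi ν) :=
  measurePreserving_pi ν ν h

section Independence

variable {ν : ι → Measure E} [∀ i, IsProbabilityMeasure (ν i)] {i j : ι} {f g : E → ℝ}

lemma indepFun_comp_eval_pi (hij : i ≠ j) (hf : Measurable f) (hg : Measurable g) :
    IndepFun (fun a : ι → E => f (a i)) (fun a => g (a j)) (Measure.pi ν) :=
  ((iIndepFun_pi (X := fun _ => id) fun _ => aemeasurable_id).indepFun hij).comp hf hg

lemma integrable_comp_eval_mul_comp_eval (hij : i ≠ j) (hf : Measurable f) (hg : Measurable g)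
    (hfi : Integrable f (ν i)) (hgj : Integrable g (ν j)) :
    Integrable (fun a : ι → E => f (a i) * g (a j)) (Measure.pi ν) :=
  (indepFun_comp_eval_pi hij hf hg).integrable_mul
    (integrable_comp_eval hfi) (integrable_comp_eval hgj)

lemma integral_comp_eval_mul_comp_eval (hij : i ≠ j) (hf : Measurable f) (hg : Measurable g) :
    ∫ a : ι → E, f (a i) * g (a j) ∂(Measure.pi ν) = (∫ e, f e ∂(ν i)) * ∫ e, g e ∂(ν j) := by
  rw [(indepFun_comp_eval_pi hij hf hg).integral_fun_mul_eq_mul_integral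
    (hf.comp (measurable_pi_apply i)).aestronglyMeasurable
    (hg.comp (measurable_pi_apply j)).aestronglyMeasurable,
    integral_comp_eval hf.aestronglyMeasurable, integral_comp_eval hg.aestronglyMeasurable]

end Independence

end ProductMeasure

section GaussianVector

lemma integrable_exp_mul_sq_gaussianReal {v : NNReal} (hv : v ≠ 0) {c : ℝ}
    (hc : c < (2 * (v : ℝ))⁻¹) :
    Integrable (fun x => Real.exp (c * x ^ 2)) (gaussianReal 0 v) := by
  rw [gaussianReal_of_var_ne_zero _ hv,
    integrable_withDensity_iff (measurable_gaussianPDF 0 v)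
      (Filter.Eventually.of_forall fun _ => gaussianPDF_lt_top)]
  refine ((integrable_exp_neg_mul_sq (sub_pos.2 hc)).const_mul (√(2 * π * v))⁻¹).congr
    (Filter.Eventually.of_forall fun x => ?_)
  simp only [toReal_gaussianPDF, gaussianPDFReal]
  rw [mul_left_comm, ← Real.exp_add]
  congr 2
  ring

lemma integral_sq_gaussianReal (v : NNReal) : ∫ x, x ^ 2 ∂(gaussianReal 0 v) = v := by
  have hvar := variance_fun_id_gaussianReal (μ := 0) (v := v)
  rwa [variance_of_integral_eq_zero (by fun_prop) integral_id_gaussianReal] at hvar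

lemma measurePreserving_neg_gaussianReal (v : NNReal) :
    MeasurePreserving Neg.neg (gaussianReal 0 v) (gaussianReal 0 v) :=
  ⟨measurable_neg, by simpa using gaussianReal_map_neg (μ := 0) (v := v)⟩

lemma integral_mul_pi_gaussianReal {ι : Type*} [Fintype ι] [DecidableEq ι] (v : NNReal)
    (i i' : ι) :
    ∫ u : ι → ℝ, u i * u i' ∂(Measure.pi fun _ => gaussianReal 0 v)
      = if i = i' then (v : ℝ) else 0 := by
  split_ifs with h
  · subst h
    simp_rw [← sq]
    rw [integral_comp_eval (μ := fun _ : ι => gaussianReal 0 v) (f := fun x => x ^ 2)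
      (by fun_prop), integral_sq_gaussianReal]
  · refine integral_eq_zero_of_comp_eq_neg
      (measurePreserving_update_neg i (measurePreserving_neg_gaussianReal v)) (by fun_prop)
      fun u => ?_
    simp [Function.update_of_ne (Ne.symm h)]

variable {q n : ℕ}

lemma measurePreserving_update_neg_stdGaussPi (k : Fin q) :
    MeasurePreserving (fun a => Function.update a k (-a k)) (stdGaussPi q n) (stdGaussPi q n) :=
  measurePreserving_update_neg k <|
    measurePreserving_neg_pi fun _ => measurePreserving_neg_gaussianReal 1

lemma zero_le_dotProduct_self {ι : Type*} [Fintype ι] (u : ι → ℝ) : 0 ≤ u ⬝ᵥ u := by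
  simpa using dotProduct_self_star_nonneg u

/-- The squared Euclidean norm on `(ℝⁿ)^q`, in terms of which all error bounds are expressed. -/
def sqNorm (a : Fin q → Fin n → ℝ) : ℝ := ∑ m, a m ⬝ᵥ a m

lemma dotProduct_self_le_sqNorm (a : Fin q → Fin n → ℝ) (m : Fin q) : a m ⬝ᵥ a m ≤ sqNorm a :=
  single_le_sum (f := fun m => a m ⬝ᵥ a m) (fun m _ => zero_le_dotProduct_self (a m)) (mem_univ m)

lemma sqNorm_nonneg (a : Fin q → Fin n → ℝ) : 0 ≤ sqNorm a :=
  sum_nonneg fun m _ => zero_le_dotProduct_self (a m)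

lemma abs_dotProduct_le {ι : Type*} [Fintype ι] (u v : ι → ℝ) :
    |u ⬝ᵥ v| ≤ (u ⬝ᵥ u + v ⬝ᵥ v) / 2 := by
  have hsub := zero_le_dotProduct_self (u - v)
  have hadd := zero_le_dotProduct_self (u + v)
  simp only [sub_dotProduct, add_dotProduct, dotProduct_sub, dotProduct_add,
    dotProduct_comm v u] at hsub hadd
  exact abs_le.2 ⟨by linarith, by linarith⟩

lemma abs_dotProduct_le_sqNorm (a : Fin q → Fin n → ℝ) (m m' : Fin q) :
    |a m ⬝ᵥ a m'| ≤ sqNorm a := by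
  linarith [abs_dotProduct_le (a m) (a m'), dotProduct_self_le_sqNorm a m,
    dotProduct_self_le_sqNorm a m']

lemma integrable_exp_mul_sqNorm {c : ℝ} (hc : c < 1 / 2) :
    Integrable (fun a => Real.exp (c * sqNorm a)) (stdGaussPi q n) := by
  have hcoord : Integrable (fun x => Real.exp (c * x ^ 2)) (gaussianReal 0 1) :=
    integrable_exp_mul_sq_gaussianReal one_ne_zero (by simpa using hc)
  have hprod : Integrable (fun a : Fin q → Fin n → ℝ => ∏ m, ∏ i, Real.exp (c * a m i ^ 2))
      (stdGaussPi q n) := by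
    unfold stdGaussPi
    exact .fintype_prod (f := fun _ (u : Fin n → ℝ) => ∏ i, Real.exp (c * u i ^ 2)) fun _ =>
      .fintype_prod (f := fun _ x => Real.exp (c * x ^ 2)) fun _ => hcoord
  refine hprod.congr (Filter.Eventually.of_forall fun a => ?_)
  simp only [sqNorm, dotProduct, ← Real.exp_sum, mul_sum, sq]

lemma integrable_of_abs_le_sqNorm_pow {f : (Fin q → Fin n → ℝ) → ℝ} (hf : Measurable f) (p : ℕ)
    (h : ∀ a, |f a| ≤ sqNorm a ^ p) : Integrable f (stdGaussPi q n) := by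
  refine ((integrable_exp_mul_sqNorm (c := 1 / 4) (by norm_num)).const_mul
    (4 ^ p * p.factorial : ℝ)).mono' hf.aestronglyMeasurable
      (Filter.Eventually.of_forall fun a => (h a).trans ?_)
  have hexp := pow_div_factorial_le_exp (sqNorm a / 4)
    (div_nonneg (sqNorm_nonneg a) (by norm_num)) p
  calc sqNorm a ^ p = 4 ^ p * p.factorial * ((sqNorm a / 4) ^ p / p.factorial) := by
        rw [div_pow]; field_simp
    _ ≤ 4 ^ p * p.factorial * Real.exp (1 / 4 * sqNorm a) := by
        rw [one_div_mul_eq_div]; gcongr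

lemma integrable_dotProduct (m m' : Fin q) :
    Integrable (fun a => a m ⬝ᵥ a m') (stdGaussPi q n) :=
  integrable_of_abs_le_sqNorm_pow (by unfold dotProduct; fun_prop) 1 fun a => by
    simpa using abs_dotProduct_le_sqNorm a m m'

lemma integrable_dotProduct_mul_dotProduct (m m' k k' : Fin q) :
    Integrable (fun a => (a m ⬝ᵥ a k) * (a m' ⬝ᵥ a k')) (stdGaussPi q n) :=
  integrable_of_abs_le_sqNorm_pow (by unfold dotProduct; fun_prop) 2 fun a => by
    rw [abs_mul, sq]
    exact mul_le_mul (abs_dotProduct_le_sqNorm a m k) (abs_dotProduct_le_sqNorm a m' k')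
      (abs_nonneg _) (sqNorm_nonneg a)

lemma integrable_coord_mul_coord (i i' : Fin n) :
    Integrable (fun u : Fin n → ℝ => u i * u i') (Measure.pi fun _ => gaussianReal 0 1) := by
  have hmem : ∀ i : Fin n, MemLp (fun u : Fin n → ℝ => u i) 2
      (Measure.pi fun _ => gaussianReal 0 1) := fun i =>
    (memLp_id_gaussianReal 2).comp_measurePreserving (measurePreserving_eval _ i)
  exact (hmem i).integrable_mul (hmem i')

lemma integral_dotProduct (m m' : Fin q) :
    ∫ a, a m ⬝ᵥ a m' ∂(stdGaussPi q n) = if m = m' then (n : ℝ) else 0 := by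
  split_ifs with h
  · subst h
    have hvec : ∫ u : Fin n → ℝ, u ⬝ᵥ u ∂(Measure.pi fun _ => gaussianReal 0 1) = n := by
      simp only [dotProduct]
      rw [integral_finsetSum _ fun i _ => integrable_coord_mul_coord i i]
      simp [integral_mul_pi_gaussianReal]
    have hmeas : Measurable fun u : Fin n → ℝ => u ⬝ᵥ u := by unfold dotProduct; fun_prop
    rw [← hvec]
    exact integral_comp_eval (μ := fun _ : Fin q => Measure.pi fun _ => gaussianReal 0 1)
      hmeas.aestronglyMeasurable
  · refine integral_eq_zero_of_comp_eq_neg (measurePreserving_update_neg_stdGaussPi m)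
      (integrable_dotProduct m m').1 fun a => ?_
    simp [Function.update_of_ne (Ne.symm h)]

lemma integral_dotProduct_sq_of_ne {m k : Fin q} (h : m ≠ k) :
    ∫ a, (a m ⬝ᵥ a k) ^ 2 ∂(stdGaussPi q n) = n := by
  have hmeas : ∀ i i' : Fin n, Measurable fun u : Fin n → ℝ => u i * u i' := by fun_prop
  have hint : ∀ i i' : Fin n,
      Integrable (fun a => (a m i * a m i') * (a k i * a k i')) (stdGaussPi q n) := fun i i' =>
    integrable_comp_eval_mul_comp_eval h (hmeas i i') (hmeas i i')
      (integrable_coord_mul_coord i i') (integrable_coord_mul_coord i i')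
  have hterm : ∀ i i' : Fin n,
      ∫ a, (a m i * a m i') * (a k i * a k i') ∂(stdGaussPi q n) = if i = i' then 1 else 0 := by
    intro i i'
    unfold stdGaussPi
    rw [integral_comp_eval_mul_comp_eval h (hmeas i i') (hmeas i i'),
      integral_mul_pi_gaussianReal, ite_zero_mul_ite_zero]
    simp
  have hexpand : ∀ a : Fin q → Fin n → ℝ,
      (a m ⬝ᵥ a k) ^ 2 = ∑ i, ∑ i', (a m i * a m i') * (a k i * a k i') := fun a => by
    simp only [dotProduct, sq, sum_mul_sum]
    exact sum_congr rfl fun i _ => sum_congr rfl fun i' _ => by ring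
  simp_rw [hexpand]
  rw [integral_finsetSum _ fun i _ => integrable_finsetSum _ fun i' _ => hint i i']
  simp_rw [integral_finsetSum _ fun i' _ => hint _ i', hterm]
  simp

lemma integral_dotProduct_mul_dotProduct {m m' k : Fin q} (hm : m ≠ k) (hm' : m' ≠ k) :
    ∫ a, (a m ⬝ᵥ a k) * (a m' ⬝ᵥ a k) ∂(stdGaussPi q n) = if m = m' then (n : ℝ) else 0 := by
  split_ifs with h
  · subst h
    simp_rw [← sq]
    exact integral_dotProduct_sq_of_ne hm
  · refine integral_eq_zero_of_comp_eq_neg (measurePreserving_update_neg_stdGaussPi m)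
      (integrable_dotProduct_mul_dotProduct m m' k k).1 fun a => ?_
    simp [Function.update_of_ne (Ne.symm h), Function.update_of_ne hm.symm]

end GaussianVector

section QuadraticForm

variable {q n : ℕ}

lemma quadForm_eq_sum_dotProduct (A : Matrix (Fin q) (Fin q) ℝ) (a : Fin q → Fin n → ℝ) :
    quadForm q n A a = ∑ m, ∑ m', A m m' * (a m ⬝ᵥ a m') := rfl

lemma measurable_quadForm (A : Matrix (Fin q) (Fin q) ℝ) : Measurable (quadForm q n A) := by
  unfold quadForm
  fun_prop

lemma quadForm_add (A B : Matrix (Fin q) (Fin q) ℝ) (a : Fin q → Fin n → ℝ) :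
    quadForm q n (A + B) a = quadForm q n A a + quadForm q n B a := by
  simp only [quadForm, Matrix.add_apply, add_mul, sum_add_distrib]

lemma quadForm_expect {ι : Type*} [Fintype ι] (A : ι → Matrix (Fin q) (Fin q) ℝ)
    (a : Fin q → Fin n → ℝ) :
    quadForm q n (Matrix.of fun m m' => 𝔼 j, A j m m') a = 𝔼 j, quadForm q n (A j) a := by
  simp only [quadForm, Matrix.of_apply, expect_mul, expect_sum_comm]

lemma abs_quadForm_le {A : Matrix (Fin q) (Fin q) ℝ} {K : ℝ} (hA : ∀ m m', |A m m'| ≤ K)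
    (a : Fin q → Fin n → ℝ) : |quadForm q n A a| ≤ K * q * sqNorm a := by
  have hterm : ∀ m m', |A m m' * (a m ⬝ᵥ a m')| ≤ K * ((a m ⬝ᵥ a m + a m' ⬝ᵥ a m') / 2) :=
    fun m m' => by
      rw [abs_mul]
      exact mul_le_mul (hA m m') (abs_dotProduct_le _ _) (abs_nonneg _)
        ((abs_nonneg _).trans (hA m m'))
  calc |quadForm q n A a| ≤ ∑ m, ∑ m', |A m m' * (a m ⬝ᵥ a m')| :=
        (abs_sum_le_sum_abs _ _).trans (sum_le_sum fun m _ => abs_sum_le_sum_abs _ _)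
    _ ≤ ∑ m, ∑ m', K * ((a m ⬝ᵥ a m + a m' ⬝ᵥ a m') / 2) :=
        sum_le_sum fun m _ => sum_le_sum fun m' _ => hterm m m'
    _ = K * q * sqNorm a := by
        simp only [sqNorm, ← mul_sum, ← sum_div, sum_add_distrib, sum_const, card_univ,
          Fintype.card_fin, nsmul_eq_mul]
        ring

lemma integrable_quadForm (A : Matrix (Fin q) (Fin q) ℝ) :
    Integrable (quadForm q n A) (stdGaussPi q n) :=
  integrable_finsetSum _ fun m _ => integrable_finsetSum _ fun m' _ =>
    (integrable_dotProduct m m').const_mul _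

lemma integral_quadForm (A : Matrix (Fin q) (Fin q) ℝ) :
    ∫ a, quadForm q n A a ∂(stdGaussPi q n) = n * A.trace := by
  have hint : ∀ m m', Integrable (fun a => A m m' * (a m ⬝ᵥ a m')) (stdGaussPi q n) :=
    fun m m' => (integrable_dotProduct m m').const_mul _
  simp only [quadForm_eq_sum_dotProduct]
  rw [integral_finsetSum _ fun m _ => integrable_finsetSum _ fun m' _ => hint m m']
  simp_rw [integral_finsetSum _ fun m' _ => hint _ m', integral_const_mul, integral_dotProduct]
  simp [Matrix.trace, mul_sum, mul_comm]

section Parity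

variable (k : Fin q)

/-- The part of `A` whose quadratic form is even in the vector `a k`: the diagonal entry at `k`
and all entries outside row and column `k`. -/
def evenPart (A : Matrix (Fin q) (Fin q) ℝ) : Matrix (Fin q) (Fin q) ℝ :=
  Matrix.of fun m m' => if m = k ↔ m' = k then A m m' else 0

/-- The part of `A` whose quadratic form is odd in the vector `a k`: row and column `k` with the
diagonal entry removed. -/
def oddPart (A : Matrix (Fin q) (Fin q) ℝ) : Matrix (Fin q) (Fin q) ℝ :=
  Matrix.of fun m m' => if m = k ↔ m' = k then 0 else A m m'

lemma evenPart_add_oddPart (A : Matrix (Fin q) (Fin q) ℝ) : evenPart k A + oddPart k A = A := by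
  ext m m'
  by_cases h : m = k ↔ m' = k <;> simp [evenPart, oddPart, h]

lemma quadForm_evenPart_add_oddPart (A : Matrix (Fin q) (Fin q) ℝ) (a : Fin q → Fin n → ℝ) :
    quadForm q n (evenPart k A) a + quadForm q n (oddPart k A) a = quadForm q n A a := by
  rw [← quadForm_add, evenPart_add_oddPart]

lemma trace_evenPart (A : Matrix (Fin q) (Fin q) ℝ) : (evenPart k A).trace = A.trace := by
  simp [Matrix.trace, evenPart]

lemma oddPart_expect {ι : Type*} [Fintype ι] (A : ι → Matrix (Fin q) (Fin q) ℝ) :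
    (Matrix.of fun m m' => 𝔼 j, oddPart k (A j) m m')
      = oddPart k (Matrix.of fun m m' => 𝔼 j, A j m m') := by
  ext m m'
  by_cases h : m = k ↔ m' = k <;> simp [oddPart, h]

lemma dotProduct_update_neg (a : Fin q → Fin n → ℝ) (m m' : Fin q) :
    Function.update a k (-a k) m ⬝ᵥ Function.update a k (-a k) m'
      = if m = k ↔ m' = k then a m ⬝ᵥ a m' else -(a m ⬝ᵥ a m') := by
  by_cases hm : m = k <;> by_cases hm' : m' = k <;> simp [hm, hm']

lemma quadForm_evenPart_update_neg (A : Matrix (Fin q) (Fin q) ℝ) (a : Fin q → Fin n → ℝ) :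
    quadForm q n (evenPart k A) (Function.update a k (-a k)) = quadForm q n (evenPart k A) a := by
  simp only [quadForm_eq_sum_dotProduct, dotProduct_update_neg]
  refine sum_congr rfl fun m _ => sum_congr rfl fun m' _ => ?_
  by_cases h : m = k ↔ m' = k <;> simp [evenPart, h]

lemma quadForm_oddPart_update_neg (A : Matrix (Fin q) (Fin q) ℝ) (a : Fin q → Fin n → ℝ) :
    quadForm q n (oddPart k A) (Function.update a k (-a k)) = -quadForm q n (oddPart k A) a := by
  simp only [quadForm_eq_sum_dotProduct, dotProduct_update_neg, ← sum_neg_distrib]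
  refine sum_congr rfl fun m _ => sum_congr rfl fun m' _ => ?_
  by_cases h : m = k ↔ m' = k <;> simp [oddPart, h]

lemma quadForm_oddPart (A : Matrix (Fin q) (Fin q) ℝ) (a : Fin q → Fin n → ℝ) :
    quadForm q n (oddPart k A) a = ∑ m ∈ univ.erase k, (A m k + A k m) * (a m ⬝ᵥ a k) := by
  have hrow : ∑ m', oddPart k A k m' * (a k ⬝ᵥ a m')
      = ∑ m ∈ univ.erase k, A k m * (a m ⬝ᵥ a k) := by
    rw [← add_sum_erase _ _ (mem_univ k)]
    simp only [oddPart, Matrix.of_apply, if_true, zero_mul, zero_add]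
    refine sum_congr rfl fun m hm => ?_
    simp [ne_of_mem_erase hm, dotProduct_comm (a k)]
  have hcol : ∀ m ∈ univ.erase k, ∑ m', oddPart k A m m' * (a m ⬝ᵥ a m')
      = A m k * (a m ⬝ᵥ a k) := fun m hm => by
    simp [oddPart, ne_of_mem_erase hm]
  rw [quadForm_eq_sum_dotProduct, ← add_sum_erase _ _ (mem_univ k), hrow, sum_congr rfl hcol,
    ← sum_add_distrib]
  exact sum_congr rfl fun m _ => by ring

lemma quadForm_oddPart_sq (A : Matrix (Fin q) (Fin q) ℝ) (a : Fin q → Fin n → ℝ) :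
    quadForm q n (oddPart k A) a ^ 2 = ∑ m ∈ univ.erase k, ∑ m' ∈ univ.erase k,
      ((A m k + A k m) * (A m' k + A k m')) * ((a m ⬝ᵥ a k) * (a m' ⬝ᵥ a k)) := by
  rw [quadForm_oddPart, sq, sum_mul_sum]
  exact sum_congr rfl fun m _ => sum_congr rfl fun m' _ => mul_mul_mul_comm _ _ _ _

lemma integrable_quadForm_oddPart_sq (A : Matrix (Fin q) (Fin q) ℝ) :
    Integrable (fun a => quadForm q n (oddPart k A) a ^ 2) (stdGaussPi q n) := by
  simp only [quadForm_oddPart_sq]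
  exact integrable_finsetSum _ fun m _ => integrable_finsetSum _ fun m' _ =>
    (integrable_dotProduct_mul_dotProduct m m' k k).const_mul _

/-- The variance of the quadratic form of `oddPart k A` under the Gaussian law, divided by `n`. -/
def crossSq (A : Matrix (Fin q) (Fin q) ℝ) : ℝ := ∑ m ∈ univ.erase k, (A m k + A k m) ^ 2

lemma integral_quadForm_oddPart_sq (A : Matrix (Fin q) (Fin q) ℝ) :
    ∫ a, quadForm q n (oddPart k A) a ^ 2 ∂(stdGaussPi q n) = n * crossSq k A := by
  have hint : ∀ m m', Integrable (fun a => ((A m k + A k m) * (A m' k + A k m')) *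
      ((a m ⬝ᵥ a k) * (a m' ⬝ᵥ a k))) (stdGaussPi q n) := fun m m' =>
    (integrable_dotProduct_mul_dotProduct m m' k k).const_mul _
  simp only [quadForm_oddPart_sq]
  rw [integral_finsetSum _ fun m _ => integrable_finsetSum _ fun m' _ => hint m m', crossSq,
    mul_sum]
  refine sum_congr rfl fun m hm => ?_
  have hmk := ne_of_mem_erase hm
  rw [integral_finsetSum _ fun m' _ => hint m m', sum_eq_single m]
  · rw [integral_const_mul, integral_dotProduct_mul_dotProduct hmk hmk, if_pos rfl]
    ring
  · intro m' hm' hne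
    rw [integral_const_mul, integral_dotProduct_mul_dotProduct hmk (ne_of_mem_erase hm'),
      if_neg hne.symm, mul_zero]
  · exact fun h => absurd hm h

end Parity

end QuadraticForm

section MatrixFamily

variable {q n : ℕ} {ι : Type*} {k : Fin q} {s L : ℝ}

/-- The bound `B` of `PerturbationBound` for quadratic forms whose matrix entries are controlled by
`L`: its tenth power is still integrable. -/
def envelope (L : ℝ) (a : Fin q → Fin n → ℝ) : ℝ := (1 + 20 * L * q) * Real.exp (sqNorm a / 40)

lemma integrable_envelope_pow (L : ℝ) :
    Integrable (fun a => envelope L a ^ 10) (stdGaussPi q n) := by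
  refine ((integrable_exp_mul_sqNorm (c := 1 / 4) (by norm_num)).const_mul
    ((1 + 20 * L * q) ^ 10)).congr (Filter.Eventually.of_forall fun a => ?_)
  simp only [envelope, mul_pow, ← Real.exp_nat_mul]
  congr 2
  push_cast
  ring

lemma perturbationBound_quadForm {A : Matrix (Fin q) (Fin q) ℝ} (hs : 0 ≤ s) (hs1 : s ≤ 1)
    (hL : 0 ≤ L) (hsmall : L * q * s ≤ 1 / 40)
    (heven : ∀ m m', |evenPart k A m m'| ≤ L * s ^ 2)
    (hodd : ∀ m m', |oddPart k A m m'| ≤ L * s) (a : Fin q → Fin n → ℝ) :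
    PerturbationBound s (envelope L a) (quadForm q n (evenPart k A) a / 2)
      (quadForm q n (oddPart k A) a / 2) := by
  have hN := sqNorm_nonneg a
  have hLq : 0 ≤ L * q := by positivity
  have hexp_one : 1 ≤ Real.exp (sqNorm a / 40) := Real.one_le_exp (by positivity)
  have hexp_le : Real.exp (sqNorm a / 40) ≤ envelope L a :=
    le_mul_of_one_le_left (Real.exp_pos _).le (by linarith)
  have hlinear : L * q * sqNorm a / 2 ≤ envelope L a := by
    have hle := Real.add_one_le_exp (sqNorm a / 40)
    have hmul := mul_le_mul_of_nonneg_left hle hLq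
    unfold envelope
    linarith
  have hx : |quadForm q n (evenPart k A) a / 2| ≤ s ^ 2 * (L * q * sqNorm a / 2) := by
    rw [abs_div, abs_two]
    linarith [abs_quadForm_le heven a]
  have hy : |quadForm q n (oddPart k A) a / 2| ≤ s * (L * q * sqNorm a / 2) := by
    rw [abs_div, abs_two]
    linarith [abs_quadForm_le hodd a]
  refine ⟨hs, hs1, hexp_one.trans hexp_le, hx.trans (by gcongr), hy.trans (by gcongr),
    (Real.exp_le_exp.2 ?_).trans hexp_le⟩
  have hss : s ^ 2 * (L * q * sqNorm a / 2) ≤ s * (L * q * sqNorm a / 2) := by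
    gcongr; exact pow_le_of_le_one hs hs1 two_ne_zero
  have hsN := mul_le_mul_of_nonneg_right hsmall hN
  linarith

lemma integral_expect_leading_term [Fintype ι] (k : Fin q) (A : ι → Matrix (Fin q) (Fin q) ℝ) :
    ∫ a, 𝔼 j, (quadForm q n (evenPart k (A j)) a / 2
        - (quadForm q n (oddPart k (A j)) a / 2) ^ 2 / 2) ∂(stdGaussPi q n)
      = n * 𝔼 j, ((A j).trace / 2 - crossSq k (A j) / 8) := by
  have heven : ∀ j, Integrable (fun a => quadForm q n (evenPart k (A j)) a / 2)
      (stdGaussPi q n) := fun j => (integrable_quadForm _).div_const 2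
  have hodd : ∀ j, Integrable (fun a => (quadForm q n (oddPart k (A j)) a / 2) ^ 2 / 2)
      (stdGaussPi q n) := fun j => by
    simpa only [div_pow] using ((integrable_quadForm_oddPart_sq k (A j)).div_const _).div_const 2
  have hlead : ∀ j, Integrable (fun a => quadForm q n (evenPart k (A j)) a / 2
      - (quadForm q n (oddPart k (A j)) a / 2) ^ 2 / 2) (stdGaussPi q n) := fun j =>
    (heven j).sub (hodd j)
  rw [integral_expect hlead, mul_expect]
  refine expect_congr rfl fun j _ => ?_
  rw [integral_sub (heven j) (hodd j)]
  simp only [div_pow, integral_div, integral_quadForm, integral_quadForm_oddPart_sq,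
    trace_evenPart]
  ring

lemma integral_expect_odd_sq [Fintype ι] (k : Fin q) (A : ι → Matrix (Fin q) (Fin q) ℝ) :
    ∫ a, (𝔼 j, quadForm q n (oddPart k (A j)) a / 2) ^ 2 ∂(stdGaussPi q n)
      = n / 4 * crossSq k (Matrix.of fun m m' => 𝔼 j, A j m m') := by
  simp only [← expect_div, ← quadForm_expect, oddPart_expect, div_pow, integral_div,
    integral_quadForm_oddPart_sq]
  ring

lemma symmetricPerturbation_quadForm {A : ι → Matrix (Fin q) (Fin q) ℝ} (hs : 0 ≤ s)
    (hs1 : s ≤ 1) (hL : 0 ≤ L) (hsmall : L * q * s ≤ 1 / 40)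
    (heven : ∀ j m m', |evenPart k (A j) m m'| ≤ L * s ^ 2)
    (hodd : ∀ j m m', |oddPart k (A j) m m'| ≤ L * s) :
    SymmetricPerturbation (stdGaussPi q n) (fun a => Function.update a k (-a k)) s (envelope L)
      (fun a j => quadForm q n (evenPart k (A j)) a / 2)
      (fun a j => quadForm q n (oddPart k (A j)) a / 2) where
  measurePreserving := measurePreserving_update_neg_stdGaussPi k
  even a := funext fun j => by rw [quadForm_evenPart_update_neg]
  odd a := funext fun j => by rw [quadForm_oddPart_update_neg, neg_div, Pi.neg_apply]
  measurable_even := measurable_pi_lambda _ fun j => (measurable_quadForm _).div_const 2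
  measurable_odd := measurable_pi_lambda _ fun j => (measurable_quadForm _).div_const 2
  bound a j := perturbationBound_quadForm hs hs1 hL hsmall (heven j) (hodd j) a
  integrable_pow := integrable_envelope_pow L

end MatrixFamily

section Weights

lemma abs_alphaVec_le_one (q i : ℕ) (j : Fin q) : |alphaVec q i j| ≤ 1 := by
  rcases Nat.eq_zero_or_pos i with rfl | hi
  · simp [alphaVec]
  have hi' : (1 : ℝ) ≤ i := by exact_mod_cast hi
  have hroot : (i : ℝ) ≤ √(i * (i + 1)) := Real.le_sqrt_of_sq_le (by nlinarith)
  have hnum : |if (j : ℕ) + 1 < i + 1 then (1 : ℝ) else if (j : ℕ) + 1 = i + 1 then -(i : ℝ)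
      else 0| ≤ i := by
    split_ifs <;> simp [hi']
  rw [alphaVec, abs_mul, abs_inv, abs_of_nonneg (Real.sqrt_nonneg _)]
  exact inv_mul_le_one_of_le₀ (hnum.trans hroot) (Real.sqrt_nonneg _)

lemma sum_alphaVec {q i : ℕ} (hi : i + 2 ≤ q) :
    ∑ j ∈ univ.filter (fun j : Fin q => (j : ℕ) < q - 1), alphaVec q i j = 0 := by
  have hcoord : ∀ j : Fin q, (if (j : ℕ) < q - 1 then alphaVec q i j else 0)
      = (√((i : ℝ) * (i + 1)))⁻¹ *
        ((if (j : ℕ) < i then 1 else 0) - i * if (j : ℕ) = i then 1 else 0) := fun j => by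
    rcases lt_trichotomy (j : ℕ) i with h | h | h
    · simp [alphaVec, h, h.ne, show (j : ℕ) < q - 1 by omega]
    · simp [alphaVec, h, show i < q - 1 by omega]
    · simp [alphaVec, h.not_gt, h.ne']
  have hlt : (range q).filter (· < i) = range i := by ext; simp; omega
  rw [sum_filter, sum_congr rfl fun j _ => hcoord j, ← mul_sum, sum_sub_distrib, ← mul_sum,
    Fin.sum_univ_eq_sum_range fun j => if j < i then (1 : ℝ) else 0,
    Fin.sum_univ_eq_sum_range fun j => if j = i then (1 : ℝ) else 0, sum_boole, hlt]
  simp [show i < q by omega]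

variable {q : ℕ}

lemma abs_omegaVec_le_one (j m : Fin q) : |omegaVec q j m| ≤ 1 := by
  unfold omegaVec
  split_ifs
  · exact abs_alphaVec_le_one ..
  · simp

lemma sum_omegaVec (m : Fin q) :
    ∑ j ∈ univ.filter (fun j : Fin q => (j : ℕ) < q - 1), omegaVec q j m = 0 := by
  unfold omegaVec
  split_ifs with h
  · exact sum_alphaVec (by omega)
  · exact sum_const_zero

lemma omegaVec_eq_zero {k : Fin q} (hk : (k : ℕ) + 2 = q) (j : Fin q) : omegaVec q j k = 0 :=
  if_neg (by omega)

lemma omegaVec_dotProduct_self_le (j : Fin q) : omegaVec q j ⬝ᵥ omegaVec q j ≤ q := by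
  calc omegaVec q j ⬝ᵥ omegaVec q j ≤ ∑ _m : Fin q, (1 : ℝ) := sum_le_sum fun m _ => by
        rw [← sq, ← sq_abs]
        exact pow_le_one₀ (abs_nonneg _) (abs_omegaVec_le_one j m)
    _ = q := by simp

/-- The combination `μ q / (q - 1)` through which `μ` enters the matrices `Q_ℓ` and `P`. -/
def scaledMu (q : ℕ) (μ : ℝ) : ℝ := μ * (q : ℝ) / ((q : ℝ) - 1)

variable {μ : ℝ}

lemma scaledMu_nonneg (hq : 2 ≤ q) (hμ : 0 ≤ μ) : 0 ≤ scaledMu q μ := by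
  have hq' : (2 : ℝ) ≤ q := by exact_mod_cast hq
  exact div_nonneg (by positivity) (by linarith)

lemma scaledMu_le (hq : 2 ≤ q) (hμ : 0 ≤ μ) : scaledMu q μ ≤ 2 * μ := by
  have hq' : (2 : ℝ) ≤ q := by exact_mod_cast hq
  rw [scaledMu, div_le_iff₀ (by linarith)]
  nlinarith

lemma scaledMu_div (hq : q ≠ 0) : scaledMu q μ / q = μ / ((q : ℝ) - 1) := by
  rw [scaledMu]
  field_simp

lemma sqrt_mul_sqrt_eq_sqrt_scaledMu (hμ : 0 ≤ μ) :
    √μ * √((q : ℝ) / ((q : ℝ) - 1)) = √(scaledMu q μ) := by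
  rw [← Real.sqrt_mul hμ, scaledMu, mul_div_assoc]

-- In 1-based indexing, `hk` says that `k` is the index `q - 1` and `hl` that `l` is `q`.
section Entries

variable {k l : Fin q}

lemma Qmat_apply (hk : (k : ℕ) + 2 = q) (j m m' : Fin q) :
    Qmat q μ j m m' = μ * omegaVec q j m * omegaVec q j m' + √μ * √(1 + scaledMu q μ) *
      (omegaVec q j m * (if m' = k then 1 else 0) + omegaVec q j m' * if m = k then 1 else 0) := by
  have hiff : ∀ m : Fin q, (m : ℕ) + 1 = q - 1 ↔ m = k := fun m => by rw [Fin.ext_iff]; omega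
  simp only [Qmat, Matrix.of_apply, hiff, scaledMu]

lemma evenPart_Qmat (hk : (k : ℕ) + 2 = q) (j m m' : Fin q) :
    evenPart k (Qmat q μ j) m m' = μ * omegaVec q j m * omegaVec q j m' := by
  have hω := omegaVec_eq_zero hk j
  by_cases hm : m = k <;> by_cases hm' : m' = k <;> simp [evenPart, Qmat_apply hk, hm, hm', hω]

lemma Qmat_add_transpose (hk : (k : ℕ) + 2 = q) (j : Fin q) {m : Fin q} (hm : m ≠ k) :
    Qmat q μ j m k + Qmat q μ j k m = 2 * (√μ * √(1 + scaledMu q μ)) * omegaVec q j m := by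
  simp only [Qmat_apply hk, omegaVec_eq_zero hk, if_neg hm, if_true]
  ring

lemma trace_Qmat (hk : (k : ℕ) + 2 = q) (j : Fin q) :
    (Qmat q μ j).trace = μ * (omegaVec q j ⬝ᵥ omegaVec q j) := by
  rw [← trace_evenPart k]
  simp only [Matrix.trace, Matrix.diag_apply, evenPart_Qmat hk, dotProduct, mul_sum, mul_assoc]

lemma crossSq_Qmat (hk : (k : ℕ) + 2 = q) (hμ : 0 ≤ μ) (j : Fin q) :
    crossSq k (Qmat q μ j) = 4 * μ * (1 + scaledMu q μ) * (omegaVec q j ⬝ᵥ omegaVec q j) := by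
  have ht := scaledMu_nonneg (q := q) (by omega) hμ
  rw [dotProduct, ← add_sum_erase _ _ (mem_univ k), omegaVec_eq_zero hk, mul_zero, zero_add,
    mul_sum, crossSq]
  refine sum_congr rfl fun m hm => ?_
  rw [Qmat_add_transpose hk j (ne_of_mem_erase hm), mul_pow, mul_pow, mul_pow, Real.sq_sqrt hμ,
    Real.sq_sqrt (by positivity)]
  ring

lemma abs_evenPart_Qmat_le (hk : (k : ℕ) + 2 = q) (hμ : 0 ≤ μ) (j m m' : Fin q) :
    |evenPart k (Qmat q μ j) m m'| ≤ μ := by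
  rw [evenPart_Qmat hk, abs_mul, abs_mul, abs_of_nonneg hμ, mul_assoc]
  exact mul_le_of_le_one_right hμ <|
    mul_le_one₀ (abs_omegaVec_le_one j m) (abs_nonneg _) (abs_omegaVec_le_one j m')

lemma abs_oddPart_Qmat_le (hk : (k : ℕ) + 2 = q) (j m m' : Fin q) :
    |oddPart k (Qmat q μ j) m m'| ≤ √μ * √(1 + scaledMu q μ) := by
  have hω := omegaVec_eq_zero hk j
  have hc : 0 ≤ √μ * √(1 + scaledMu q μ) := by positivity
  have hle : ∀ m, |√μ * √(1 + scaledMu q μ) * omegaVec q j m| ≤ √μ * √(1 + scaledMu q μ) :=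
    fun m => by
      rw [abs_mul, abs_of_nonneg hc]
      exact mul_le_of_le_one_right hc (abs_omegaVec_le_one j m)
  by_cases hm : m = k <;> by_cases hm' : m' = k
  · simpa [oddPart, hm, hm'] using hc
  · simpa [oddPart, Qmat_apply hk, hm, hm', hω] using hle m'
  · simpa [oddPart, Qmat_apply hk, hm, hm', hω] using hle m
  · simpa [oddPart, hm, hm'] using hc

lemma Pmat_apply (hk : (k : ℕ) + 2 = q) (hl : (l : ℕ) + 1 = q) (hμ : 0 ≤ μ) (m m' : Fin q) :
    Pmat q μ m m' = (1 + scaledMu q μ)⁻¹ *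
      (if m = l ∧ m' = l then scaledMu q μ
       else if m = k ∧ m' = k then -scaledMu q μ * (2 + scaledMu q μ)
       else if (m = l ∧ m' = k) ∨ (m = k ∧ m' = l) then √(scaledMu q μ)
       else 0) := by
  have hpenult : ∀ m : Fin q, (m : ℕ) + 1 = q - 1 ↔ m = k := fun m => by
    rw [Fin.ext_iff]; omega
  have hlast : ∀ m : Fin q, (m : ℕ) + 1 = q ↔ m = l := fun m => by rw [Fin.ext_iff]; omega
  simp only [Pmat, Matrix.of_apply, hpenult, hlast, sqrt_mul_sqrt_eq_sqrt_scaledMu hμ, scaledMu]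

lemma trace_Pmat (hk : (k : ℕ) + 2 = q) (hl : (l : ℕ) + 1 = q) (hμ : 0 ≤ μ) :
    (Pmat q μ).trace = -scaledMu q μ := by
  have hkl : k ≠ l := by rw [Ne, Fin.ext_iff]; omega
  have ht := scaledMu_nonneg (q := q) (by omega) hμ
  have hzero : ∀ m ∈ (univ.erase k).erase l, Pmat q μ m m = 0 := fun m hm => by
    simp [Pmat_apply hk hl hμ, ne_of_mem_erase hm, ne_of_mem_erase (mem_of_mem_erase hm)]
  rw [Matrix.trace, ← add_sum_erase _ _ (mem_univ k),
    ← add_sum_erase _ _ (mem_erase.2 ⟨hkl.symm, mem_univ l⟩)]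
  simp only [Matrix.diag_apply]
  rw [sum_eq_zero hzero]
  simp only [Pmat_apply hk hl hμ, hkl, false_and, and_self, if_false, if_true]
  field_simp
  ring

lemma crossSq_Pmat (hk : (k : ℕ) + 2 = q) (hl : (l : ℕ) + 1 = q) (hμ : 0 ≤ μ) :
    crossSq k (Pmat q μ) = 4 * scaledMu q μ * ((1 + scaledMu q μ) ^ 2)⁻¹ := by
  have hkl : k ≠ l := by rw [Ne, Fin.ext_iff]; omega
  have ht := scaledMu_nonneg (q := q) (by omega) hμ
  rw [crossSq, sum_eq_single_of_mem l (mem_erase.2 ⟨hkl.symm, mem_univ l⟩)]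
  · simp only [Pmat_apply hk hl hμ, hkl, hkl.symm, false_and, and_false, and_self, or_false,
      false_or, if_false, if_true]
    rw [← two_mul, mul_pow, mul_pow, Real.sq_sqrt ht, inv_pow]
    ring
  · intro m hm hml
    simp [Pmat_apply hk hl hμ, hml, hkl, ne_of_mem_erase hm]

lemma abs_evenPart_Pmat_le (hk : (k : ℕ) + 2 = q) (hl : (l : ℕ) + 1 = q)
    (hμ : 0 ≤ μ) (m m' : Fin q) :
    |evenPart k (Pmat q μ) m m'| ≤ 2 * scaledMu q μ := by
  have ht := scaledMu_nonneg (q := q) (by omega) hμ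
  have hentry : |(1 + scaledMu q μ)⁻¹ * (-scaledMu q μ * (2 + scaledMu q μ))|
      ≤ 2 * scaledMu q μ := by
    rw [neg_mul, mul_neg, abs_neg, abs_of_nonneg (by positivity), inv_mul_le_iff₀ (by positivity)]
    nlinarith
  have hentry' : |(1 + scaledMu q μ)⁻¹ * scaledMu q μ| ≤ 2 * scaledMu q μ := by
    rw [abs_of_nonneg (by positivity), inv_mul_le_iff₀ (by positivity)]
    nlinarith
  simp only [evenPart, Matrix.of_apply, Pmat_apply hk hl hμ]
  split_ifs with hparity <;> first | assumption | simp_all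

lemma abs_oddPart_Pmat_le (hk : (k : ℕ) + 2 = q) (hl : (l : ℕ) + 1 = q)
    (hμ : 0 ≤ μ) (m m' : Fin q) :
    |oddPart k (Pmat q μ) m m'| ≤ √(scaledMu q μ) := by
  have ht := scaledMu_nonneg (q := q) (by omega) hμ
  have hentry : |(1 + scaledMu q μ)⁻¹ * √(scaledMu q μ)| ≤ √(scaledMu q μ) := by
    rw [abs_of_nonneg (by positivity)]
    exact mul_le_of_le_one_left (Real.sqrt_nonneg _) (inv_le_one_of_one_le₀ (by linarith))
  simp only [oddPart, Matrix.of_apply, Pmat_apply hk hl hμ]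
  split_ifs <;> first | assumption | simp_all

end Entries

/-- The matrices `Q_1, …, Q_{q-1}, P` as a single family indexed by `Fin q`, with `P` last. -/
def weightMat (q : ℕ) (μ : ℝ) (j : Fin q) : Matrix (Fin q) (Fin q) ℝ :=
  if (j : ℕ) < q - 1 then Qmat q μ j else Pmat q μ

lemma one_sub_inv_one_add_sq_nonneg {t : ℝ} (ht : 0 ≤ t) : 0 ≤ 1 - ((1 + t) ^ 2)⁻¹ :=
  sub_nonneg.2 (inv_le_one_of_one_le₀ (one_le_pow₀ (by linarith)))

lemma one_sub_inv_one_add_sq_le {t : ℝ} (ht : 0 ≤ t) : 1 - ((1 + t) ^ 2)⁻¹ ≤ 2 * t := by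
  have hinv : 1 - 2 * t ≤ ((1 + t) ^ 2)⁻¹ := by
    rw [← one_div, le_div_iff₀ (by positivity)]
    nlinarith [pow_nonneg ht 2, pow_nonneg ht 3]
  linarith

lemma scaledMu_mul_one_sub_inv_nonneg (hq : 2 ≤ q) (hμ : 0 ≤ μ) :
    0 ≤ scaledMu q μ * (1 - ((1 + scaledMu q μ) ^ 2)⁻¹) :=
  have ht := scaledMu_nonneg hq hμ
  mul_nonneg ht (one_sub_inv_one_add_sq_nonneg ht)

lemma scaledMu_mul_one_sub_inv_le (hq : 2 ≤ q) (hμ : 0 ≤ μ) :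
    scaledMu q μ * (1 - ((1 + scaledMu q μ) ^ 2)⁻¹) ≤ 8 * μ ^ 2 := by
  have ht := scaledMu_nonneg hq hμ
  have ht_le := scaledMu_le hq hμ
  have hgap := one_sub_inv_one_add_sq_le ht
  nlinarith

section Family

variable {k l : Fin q}

lemma expect_weightMat (hl : (l : ℕ) + 1 = q) (f : Matrix (Fin q) (Fin q) ℝ → ℝ) :
    𝔼 j, f (weightMat q μ j)
      = (∑ j ∈ univ.filter (fun j : Fin q => (j : ℕ) < q - 1), f (Qmat q μ j) + f (Pmat q μ))
        / q := by
  have hlast : univ.filter (fun j : Fin q => ¬(j : ℕ) < q - 1) = {l} := by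
    ext j
    simp only [mem_filter, mem_univ, true_and, mem_singleton, Fin.ext_iff]
    omega
  simp only [Fintype.expect_eq_sum_div_card, Fintype.card_fin, weightMat, apply_ite f, sum_ite,
    hlast, sum_singleton]

lemma Zfun_eq_meanExpGap (hl : (l : ℕ) + 1 = q) {n : ℕ} (a : Fin q → Fin n → ℝ) :
    Zfun q n μ a = meanExpGap fun j => quadForm q n (weightMat q μ j) a / 2 := by
  have hcard : univ.Nonempty := ⟨l, mem_univ l⟩
  rw [meanExpGap, expect_sub_distrib, expect_const hcard,
    expect_weightMat hl fun A => Real.exp (-(quadForm q n A a / 2)), Zfun]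
  have hexp : ∀ A, -(1 / 2) * quadForm q n A a = -(quadForm q n A a / 2) := fun A => by ring
  simp only [hexp]
  ring

lemma Zfun_eq_meanExpGap_evenPart_add_oddPart (hl : (l : ℕ) + 1 = q)
    (k : Fin q) {n : ℕ} (a : Fin q → Fin n → ℝ) :
    Zfun q n μ a = meanExpGap ((fun j => quadForm q n (evenPart k (weightMat q μ j)) a / 2)
      + fun j => quadForm q n (oddPart k (weightMat q μ j)) a / 2) := by
  rw [Zfun_eq_meanExpGap hl]
  congr 1 with j
  rw [Pi.add_apply, ← add_div, quadForm_evenPart_add_oddPart]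

lemma abs_evenPart_weightMat_le (hk : (k : ℕ) + 2 = q) (hl : (l : ℕ) + 1 = q)
    (hμ : 0 ≤ μ) (j m m' : Fin q) :
    |evenPart k (weightMat q μ j) m m'| ≤ 4 * √μ ^ 2 := by
  rw [Real.sq_sqrt hμ, weightMat]
  split_ifs
  · linarith [abs_evenPart_Qmat_le hk hμ j m m']
  · linarith [abs_evenPart_Pmat_le hk hl hμ m m', scaledMu_le (q := q) (by omega) hμ]

lemma abs_oddPart_weightMat_le (hk : (k : ℕ) + 2 = q) (hl : (l : ℕ) + 1 = q)
    (hμ : 0 ≤ μ) (hμ1 : μ ≤ 1) (j m m' : Fin q) :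
    |oddPart k (weightMat q μ j) m m'| ≤ 4 * √μ := by
  have ht := scaledMu_le (q := q) (by omega) hμ
  rw [weightMat]
  split_ifs
  · have hroot : √(1 + scaledMu q μ) ≤ 4 := Real.sqrt_le_iff.2 ⟨by norm_num, by linarith⟩
    linarith [abs_oddPart_Qmat_le (μ := μ) hk j m m',
      mul_le_mul_of_nonneg_left hroot (Real.sqrt_nonneg μ)]
  · have hroot : √(scaledMu q μ) ≤ 4 * √μ := Real.sqrt_le_iff.2
      ⟨by positivity, by rw [mul_pow, Real.sq_sqrt hμ]; linarith⟩
    exact (abs_oddPart_Pmat_le hk hl hμ m m').trans hroot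

lemma symmetricPerturbation_weightMat (hk : (k : ℕ) + 2 = q) (hl : (l : ℕ) + 1 = q)
    (n : ℕ) (hμ : 0 ≤ μ) (hsmall : 160 * q * √μ ≤ 1) :
    SymmetricPerturbation (stdGaussPi q n) (fun a => Function.update a k (-a k)) √μ (envelope 4)
      (fun a j => quadForm q n (evenPart k (weightMat q μ j)) a / 2)
      (fun a j => quadForm q n (oddPart k (weightMat q μ j)) a / 2) := by
  have hq : (1 : ℝ) ≤ q := by exact_mod_cast (by omega : 1 ≤ q)
  have hroot : √μ ≤ 1 := by nlinarith [Real.sqrt_nonneg μ]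
  exact symmetricPerturbation_quadForm (Real.sqrt_nonneg μ) hroot (by norm_num) (by linarith)
    (abs_evenPart_weightMat_le hk hl hμ)
    (abs_oddPart_weightMat_le hk hl hμ (by simpa using hroot))

lemma crossSq_expect_weightMat (hk : (k : ℕ) + 2 = q) (hl : (l : ℕ) + 1 = q) (hμ : 0 ≤ μ) :
    crossSq k (Matrix.of fun m m' => 𝔼 j, weightMat q μ j m m')
      = 4 * scaledMu q μ * ((1 + scaledMu q μ) ^ 2)⁻¹ / q ^ 2 := by
  rw [← crossSq_Pmat hk hl hμ, crossSq, crossSq, sum_div]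
  refine sum_congr rfl fun m hm => ?_
  rw [Matrix.of_apply, Matrix.of_apply, ← expect_add_distrib,
    expect_weightMat hl fun A => A m k + A k m,
    sum_congr rfl fun j _ => Qmat_add_transpose hk j (ne_of_mem_erase hm), ← mul_sum,
    sum_omegaVec, mul_zero, zero_add, div_pow]

lemma abs_trace_sub_crossSq_Qmat_le (hk : (k : ℕ) + 2 = q) (hμ : 0 ≤ μ) (j : Fin q) :
    |(Qmat q μ j).trace / 2 - crossSq k (Qmat q μ j) / 8| ≤ q * μ ^ 2 := by
  have ht := scaledMu_nonneg (q := q) (by omega) hμ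
  have ht_le := scaledMu_le (q := q) (by omega) hμ
  have hω := zero_le_dotProduct_self (omegaVec q j)
  calc _ = |-(μ * scaledMu q μ * (omegaVec q j ⬝ᵥ omegaVec q j) / 2)| := by
        rw [trace_Qmat hk, crossSq_Qmat hk hμ]; congr 1; ring
    _ = μ * scaledMu q μ * (omegaVec q j ⬝ᵥ omegaVec q j) / 2 := by
        rw [abs_neg, abs_of_nonneg (by positivity)]
    _ ≤ μ * (2 * μ) * q / 2 := by gcongr; exact omegaVec_dotProduct_self_le j
    _ = q * μ ^ 2 := by ring

lemma abs_trace_sub_crossSq_Pmat_add_le (hk : (k : ℕ) + 2 = q) (hl : (l : ℕ) + 1 = q) (hμ : 0 ≤ μ) :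
    |(Pmat q μ).trace / 2 - crossSq k (Pmat q μ) / 8 + scaledMu q μ| ≤ 4 * μ ^ 2 := by
  have hgap := scaledMu_mul_one_sub_inv_nonneg (q := q) (by omega) hμ
  calc _ = |scaledMu q μ * (1 - ((1 + scaledMu q μ) ^ 2)⁻¹) / 2| := by
        rw [trace_Pmat hk hl hμ, crossSq_Pmat hk hl hμ]; congr 1; ring
    _ = scaledMu q μ * (1 - ((1 + scaledMu q μ) ^ 2)⁻¹) / 2 := abs_of_nonneg (by positivity)
    _ ≤ 4 * μ ^ 2 := by linarith [scaledMu_mul_one_sub_inv_le (q := q) (by omega) hμ]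

lemma abs_expect_trace_sub_crossSq_add_le (hk : (k : ℕ) + 2 = q) (hl : (l : ℕ) + 1 = q)
    (hμ : 0 ≤ μ) :
    |𝔼 j, ((weightMat q μ j).trace / 2 - crossSq k (weightMat q μ j) / 8) + μ / ((q : ℝ) - 1)|
      ≤ (q + 2) * μ ^ 2 := by
  have hq : (2 : ℝ) ≤ q := by exact_mod_cast (by omega : 2 ≤ q)
  have hsum : |∑ j ∈ univ.filter (fun j : Fin q => (j : ℕ) < q - 1),
      ((Qmat q μ j).trace / 2 - crossSq k (Qmat q μ j) / 8)| ≤ q * (q * μ ^ 2) := by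
    calc _ ≤ ∑ j : Fin q, |(Qmat q μ j).trace / 2 - crossSq k (Qmat q μ j) / 8| :=
          (abs_sum_le_sum_abs _ _).trans <|
            sum_le_sum_of_subset_of_nonneg (filter_subset _ _) fun _ _ _ => abs_nonneg _
      _ ≤ ∑ _j : Fin q, q * μ ^ 2 :=
          sum_le_sum fun j _ => abs_trace_sub_crossSq_Qmat_le hk hμ j
      _ = q * (q * μ ^ 2) := by simp
  rw [expect_weightMat hl fun A => A.trace / 2 - crossSq k A / 8,
    ← scaledMu_div (q := q) (by omega), ← add_div, add_assoc, abs_div,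
    abs_of_nonneg (by positivity : (0 : ℝ) ≤ q), div_le_iff₀ (by positivity)]
  refine (abs_add_le _ _).trans
    ((add_le_add hsum (abs_trace_sub_crossSq_Pmat_add_le hk hl hμ)).trans ?_)
  nlinarith [sq_nonneg μ]

lemma abs_crossSq_expect_sub_le (hk : (k : ℕ) + 2 = q) (hl : (l : ℕ) + 1 = q) (hμ : 0 ≤ μ) :
    |crossSq k (Matrix.of fun m m' => 𝔼 j, weightMat q μ j m m') / 4 - μ / (q * ((q : ℝ) - 1))|
      ≤ 2 * μ ^ 2 := by
  have hq : (2 : ℝ) ≤ q := by exact_mod_cast (by omega : 2 ≤ q)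
  have hgap := scaledMu_mul_one_sub_inv_nonneg (q := q) (by omega) hμ
  calc _ = |-(scaledMu q μ * (1 - ((1 + scaledMu q μ) ^ 2)⁻¹) / q ^ 2)| := by
        rw [crossSq_expect_weightMat hk hl hμ, div_mul_eq_div_div_swap,
          ← scaledMu_div (q := q) (by omega)]
        congr 1; ring
    _ = scaledMu q μ * (1 - ((1 + scaledMu q μ) ^ 2)⁻¹) / q ^ 2 := by
        rw [abs_neg, abs_of_nonneg (by positivity)]
    _ ≤ 8 * μ ^ 2 / 2 ^ 2 := by
        gcongr ?_ / ?_ ^ 2; exact scaledMu_mul_one_sub_inv_le (by omega) hμ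
    _ = 2 * μ ^ 2 := by ring

lemma abs_integral_Zfun_add_le (hk : (k : ℕ) + 2 = q) (hl : (l : ℕ) + 1 = q)
    (n : ℕ) (hμ : 0 ≤ μ) (hsmall : 160 * q * √μ ≤ 1) :
    |(∫ a, Zfun q n μ a ∂(stdGaussPi q n)) + n * μ / ((q : ℝ) - 1)|
      ≤ (18 * (∫ a, envelope 4 a ^ 10 ∂(stdGaussPi q n)) + n * (q + 2)) * μ ^ 2 := by
  have : Nonempty (Fin q) := ⟨k⟩
  have hroot : √μ ^ 4 = μ ^ 2 := by rw [pow_mul √μ 2 2, Real.sq_sqrt hμ]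
  have hexpansion :=
    (symmetricPerturbation_weightMat hk hl n hμ hsmall).abs_integral_meanExpGap_sub_le
  simp only [← Zfun_eq_meanExpGap_evenPart_add_oddPart hl k, integral_expect_leading_term,
    hroot] at hexpansion
  have hmoment := mul_le_mul_of_nonneg_left (abs_expect_trace_sub_crossSq_add_le hk hl hμ)
    n.cast_nonneg
  rw [← Nat.abs_cast n, ← abs_mul, Nat.abs_cast] at hmoment
  calc _ = |((∫ a, Zfun q n μ a ∂(stdGaussPi q n))
          - n * 𝔼 j, ((weightMat q μ j).trace / 2 - crossSq k (weightMat q μ j) / 8))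
        + n * (𝔼 j, ((weightMat q μ j).trace / 2 - crossSq k (weightMat q μ j) / 8)
          + μ / ((q : ℝ) - 1))| := by congr 1; ring
    _ ≤ _ := (abs_add_le _ _).trans (add_le_add hexpansion hmoment)
    _ = _ := by ring

lemma abs_integral_Zfun_sq_sub_le (hk : (k : ℕ) + 2 = q) (hl : (l : ℕ) + 1 = q)
    (n : ℕ) (hμ : 0 ≤ μ) (hsmall : 160 * q * √μ ≤ 1) :
    |(∫ a, Zfun q n μ a ^ 2 ∂(stdGaussPi q n)) - n * μ / (q * ((q : ℝ) - 1))|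
      ≤ (760 * (∫ a, envelope 4 a ^ 10 ∂(stdGaussPi q n)) + n * 2) * μ ^ 2 := by
  have : Nonempty (Fin q) := ⟨k⟩
  have hroot : √μ ^ 4 = μ ^ 2 := by rw [pow_mul √μ 2 2, Real.sq_sqrt hμ]
  have hexpansion :=
    (symmetricPerturbation_weightMat hk hl n hμ hsmall).abs_integral_meanExpGap_sq_sub_le
  simp only [← Zfun_eq_meanExpGap_evenPart_add_oddPart hl k, integral_expect_odd_sq,
    hroot] at hexpansion
  have hmoment := mul_le_mul_of_nonneg_left (abs_crossSq_expect_sub_le hk hl hμ) n.cast_nonneg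
  rw [← Nat.abs_cast n, ← abs_mul, Nat.abs_cast] at hmoment
  calc _ = |((∫ a, Zfun q n μ a ^ 2 ∂(stdGaussPi q n))
          - n / 4 * crossSq k (Matrix.of fun m m' => 𝔼 j, weightMat q μ j m m'))
        + n * (crossSq k (Matrix.of fun m m' => 𝔼 j, weightMat q μ j m m') / 4
          - μ / (q * ((q : ℝ) - 1)))| := by congr 1; ring
    _ ≤ _ := (abs_add_le _ _).trans (add_le_add hexpansion hmoment)
    _ = _ := by ring

end Family

end Weights

/-- Corollary 5 of the paper.
Regarding `𝒵_1` and `𝒵_2` as functions of `μ` (with `q, n` fixed), there are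
constants `C > 0` and `δ ∈ (0,1)` such that for all `μ ∈ (0,δ)`:
`|𝒵_1 + nμ/(q−1)| ≤ Cμ²` and `|𝒵_2 − (n/2)μ/(q(q−1))| ≤ Cμ²`. -/
theorem calZ_one_two_leading_order
    (q n : ℕ) (hq : 2 ≤ q) (hn : 1 ≤ n) :
    ∃ C > (0 : ℝ), ∃ δ ∈ Set.Ioo (0 : ℝ) 1, ∀ μ ∈ Set.Ioo (0 : ℝ) δ,
      |calZ q n μ 1 + (n : ℝ) * μ / ((q : ℝ) - 1)| ≤ C * μ ^ 2 ∧
      |calZ q n μ 2 - ((n : ℝ) / 2) * μ / ((q : ℝ) * ((q : ℝ) - 1))| ≤ C * μ ^ 2 := by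
  obtain ⟨k, hk⟩ : ∃ k : Fin q, (k : ℕ) + 2 = q := ⟨⟨q - 2, by omega⟩, Nat.sub_add_cancel hq⟩
  obtain ⟨l, hl⟩ : ∃ l : Fin q, (l : ℕ) + 1 = q :=
    ⟨⟨q - 1, by omega⟩, Nat.sub_add_cancel (by omega)⟩
  have hq' : (2 : ℝ) ≤ q := by exact_mod_cast hq
  set I := ∫ a, envelope 4 a ^ 10 ∂(stdGaussPi q n)
  have hI_nonneg : 0 ≤ I := integral_nonneg fun a => (even_two.mul_left 5).pow_nonneg _
  refine ⟨760 * I + n * (q + 2) + 1, by positivity, ((160 * q) ^ 2)⁻¹,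
    ⟨by positivity, inv_lt_one_of_one_lt₀ (by nlinarith)⟩, fun μ ⟨hμ, hμδ⟩ => ?_⟩
  have hsmall : 160 * q * √μ ≤ 1 := by
    rw [← le_inv_mul_iff₀ (by positivity), mul_one]
    exact Real.sqrt_le_iff.2 ⟨by positivity, by rw [inv_pow]; exact hμδ.le⟩
  have hfirst := abs_integral_Zfun_add_le hk hl n hμ.le hsmall
  have hsecond := abs_integral_Zfun_sq_sub_le hk hl n hμ.le hsmall
  have hsq := sq_nonneg μ
  refine ⟨?_, ?_⟩
  · simp only [calZ, Nat.cast_one, div_one, one_mul, pow_one]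
    refine hfirst.trans (mul_le_mul_of_nonneg_right ?_ hsq)
    linarith
  · calc |calZ q n μ 2 - n / 2 * μ / (q * ((q : ℝ) - 1))|
        = |(∫ a, Zfun q n μ a ^ 2 ∂(stdGaussPi q n)) - n * μ / (q * ((q : ℝ) - 1))| / 2 := by
          rw [calZ, ← abs_two, ← abs_div, abs_two]; congr 1; push_cast; ring
      _ ≤ _ := (half_le_self (abs_nonneg _)).trans <|
        hsecond.trans <| mul_le_mul_of_nonneg_right (by nlinarith) hsq

end
end
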